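/- arXiv:2401.15812 — 2 statements merged into one kernel-verified Lean document; each statement's English description precedes it below -/
import Mathlib

section
/- With high probability, for every vertex v with 1 ≤ deg_{B_{⌊Cn⌋}}(v) ≤ k−1, at least k−1 of the edges e_{⌊Cn⌋+1}, …, e_{τ_k} are incident to v. -/
open Finset Filter

namespace RGP

/-- Number of edges of the complete graph on `n` vertices. -/
def numEdges (n : ℕ) : ℕ := n * (n - 1) / 2

/-- An edge of the complete graph on `Fin n` (an unordered pair of distinct vertices). -/
abbrev EdgeType (n : ℕ) := {e : Sym2 (Fin n) // ¬ e.IsDiag}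

/-- A uniformly random permutation of the edges of `K_n` is modelled by a bijection
`σ` between positions `Fin (numEdges n)` and edges; `σ i` is the edge `e_{i+1}`. -/
abbrev Ord (n : ℕ) := Fin (numEdges n) ≃ EdgeType n

/-- Degree of a vertex `v` in a set `S` of edges. -/
def deg {n : ℕ} (S : Finset (Sym2 (Fin n))) (v : Fin n) : ℕ :=
  (S.filter (fun e => v ∈ e)).card

/-- The edge set `{e_1, …, e_m}` of `G_{n,m}` in the random graph process `σ`. -/
def procEdges {n : ℕ} (σ : Ord n) (m : ℕ) : Finset (Sym2 (Fin n)) :=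
  (Finset.univ.filter (fun i : Fin (numEdges n) => (i : ℕ) < m)).image (fun i => (σ i).1)

/-- The hitting time `τ_k` for minimum degree at least `k`. -/
noncomputable def tau {n : ℕ} (k : ℕ) (σ : Ord n) : ℕ :=
  sInf {m | ∀ v : Fin n, k ≤ deg (procEdges σ m) v}

open scoped Classical in
/-- The probability of an event under the uniformly random edge ordering. -/
noncomputable def Pr {n : ℕ} (p : Ord n → Prop) : ℝ :=
  ((Finset.univ : Finset (Ord n)).filter p).card / (Fintype.card (Ord n) : ℝ)

/-- A deterministic online strategy: given the sequence of edges revealed so far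
(the last entry being the edge just revealed), decide whether to purchase it. -/
abbrev Strategy (n : ℕ) := List (Sym2 (Fin n)) → Bool

/-- The list of the first `i` revealed edges `e_1, …, e_i`. -/
def prefixList {n : ℕ} (σ : Ord n) (i : ℕ) : List (Sym2 (Fin n)) :=
  (List.range i).filterMap (fun j => if h : j < numEdges n then some (σ ⟨j, h⟩).1 else none)

/-- `buy st σ i` is the edge set of Builder's graph `B_i`: the edges purchased by the
strategy `st` among `e_1, …, e_i`. -/
def buy {n : ℕ} (st : Strategy n) (σ : Ord n) : ℕ → Finset (Sym2 (Fin n))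
  | 0 => ∅
  | i + 1 =>
    if h : i < numEdges n then
      if st (prefixList σ (i + 1)) then insert (σ ⟨i, h⟩).1 (buy st σ i)
      else buy st σ i
    else buy st σ i

end RGP

namespace RGP

open scoped Classical in
/-- Builder's graph from the first loop of Algorithm 1: `e_i` is purchased if and only if
both of its endpoints have degree less than `k` in `B_{i−1}`, or at least one endpoint
has degree `0` in `G_{n,i−1}`. -/
noncomputable def algB {n : ℕ} (k : ℕ) (σ : Ord n) : ℕ → Finset (Sym2 (Fin n))
  | 0 => ∅
  | i + 1 =>
    if h : i < numEdges n then
      if (∀ v ∈ ((σ ⟨i, h⟩ : EdgeType n) : Sym2 (Fin n)), deg (algB k σ i) v < k) ∨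
          (∃ v ∈ ((σ ⟨i, h⟩ : EdgeType n) : Sym2 (Fin n)), deg (procEdges σ i) v = 0) then
        insert ((σ ⟨i, h⟩ : EdgeType n) : Sym2 (Fin n)) (algB k σ i)
      else algB k σ i
    else algB k σ i

end RGP

namespace RGP

section generic
open scoped Classical

/-- number of bijections sending positions: `S` inside `P`, `T` outside `P` -/
noncomputable def cnt {α β : Type} [Fintype α] [Fintype β] (P : Finset α) (S T : Finset β) : ℕ :=
  ((Finset.univ : Finset (α ≃ β)).filter
    (fun σ => (∀ e ∈ S, σ.symm e ∈ P) ∧ ∀ e ∈ T, σ.symm e ∉ P)).card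

theorem cnt_symm {α β : Type} [Fintype α] [Fintype β] (P : Finset α) (S T : Finset β) :
    cnt P S T = cnt Pᶜ T S := by
  unfold cnt
  congr 1
  ext σ
  simp [and_comm]

theorem cnt_swap {α β : Type} [Fintype α] [Fintype β] (P : Finset α) (S T : Finset β)
    (e e' : β) (he : e ∉ S) (he2 : e ∉ T) (he' : e' ∉ S) (he2' : e' ∉ T) :
    cnt P (insert e S) T = cnt P (insert e' S) T := by
  have key : ∀ e e' : β, e ∉ S → e ∉ T → e' ∉ S → e' ∉ T →
      cnt P (insert e S) T ≤ cnt P (insert e' S) T := by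
    intro e e' he he2 he' he2'
    unfold cnt
    apply Finset.card_le_card_of_injOn (fun σ : α ≃ β => σ.trans (Equiv.swap e e'))
    · intro σ hσ
      simp only [Finset.coe_filter, Finset.mem_univ, true_and, Set.mem_ofPred_eq,
        Finset.mem_insert, forall_eq_or_imp, Equiv.symm_trans_apply, Equiv.symm_swap,
        Equiv.swap_apply_right] at hσ ⊢
      refine ⟨⟨hσ.1.1, ?_⟩, ?_⟩
      · intro x hx
        rw [Equiv.swap_apply_of_ne_of_ne]
        · exact hσ.1.2 x hx
        · rintro rfl; exact he hx
        · rintro rfl; exact he' hx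
      · intro x hx
        rw [Equiv.swap_apply_of_ne_of_ne]
        · exact hσ.2 x hx
        · rintro rfl; exact he2 hx
        · rintro rfl; exact he2' hx
    · intro σ _ τ _ h
      have h' : σ.trans (Equiv.swap e e') = τ.trans (Equiv.swap e e') := h
      ext x
      have := congrArg (fun f : α ≃ β => f x) h'
      simpa using this
  exact le_antisymm (key _ _ he he2 he' he2') (key _ _ he' he2' he he2)

theorem cnt_step {α β : Type} [Fintype α] [Fintype β] (P : Finset α) (S T : Finset β)
    (hST : Disjoint S T) (e : β) (he : e ∉ S) (he2 : e ∉ T) :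
    (cnt P (insert e S) T : ℝ) * ((Fintype.card β : ℝ) - S.card - T.card)
      = cnt P S T * ((P.card : ℝ) - S.card) := by
  set C := (Finset.univ : Finset (α ≃ β)).filter
    (fun σ => (∀ e ∈ S, σ.symm e ∈ P) ∧ ∀ e ∈ T, σ.symm e ∉ P) with hC
  have h1 : ∑ x ∈ (S ∪ T)ᶜ, (cnt P (insert x S) T : ℝ)
      = (cnt P (insert e S) T : ℝ) * ((Fintype.card β : ℝ) - S.card - T.card) := by
    rw [Finset.sum_congr rfl (g := fun _ => (cnt P (insert e S) T : ℝ))]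
    · rw [Finset.sum_const, nsmul_eq_mul, Finset.card_compl,
        Nat.cast_sub (Finset.card_le_univ _), Finset.card_union_of_disjoint hST]
      push_cast; ring
    · intro x hx
      simp only [Finset.mem_compl, Finset.mem_union, not_or] at hx
      rw [cnt_swap P S T x e hx.1 hx.2 he he2]
  have h2 : ∀ x ∈ (S ∪ T)ᶜ, (cnt P (insert x S) T : ℝ)
      = ∑ σ ∈ C, if σ.symm x ∈ P then (1 : ℝ) else 0 := by
    intro x _
    rw [Finset.sum_boole]
    unfold cnt
    congr 2
    ext σ
    simp only [hC, Finset.mem_filter, Finset.mem_univ, true_and, Finset.mem_insert,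
      forall_eq_or_imp]
    tauto
  rw [← h1, Finset.sum_congr rfl h2, Finset.sum_comm]
  rw [Finset.sum_congr rfl (g := fun _ => ((P.card : ℝ) - S.card))]
  · rw [Finset.sum_const, nsmul_eq_mul]; rfl
  · intro σ hσ
    simp only [hC, Finset.mem_filter, Finset.mem_univ, true_and] at hσ
    rw [Finset.sum_boole]
    have : (Finset.filter (fun x => σ.symm x ∈ P) (S ∪ T)ᶜ) = (P.image σ) \ S := by
      ext x
      simp only [Finset.mem_filter, Finset.mem_compl, Finset.mem_union, not_or,
        Finset.mem_sdiff, Finset.mem_image]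
      constructor
      · rintro ⟨⟨a, b⟩, c⟩
        exact ⟨⟨_, c, by simp⟩, a⟩
      · rintro ⟨⟨y, hy, rfl⟩, a⟩
        refine ⟨⟨a, fun h => ?_⟩, by simpa using hy⟩
        exact hσ.2 _ h (by simpa using hy)
    rw [this, Finset.card_sdiff_of_subset, Nat.cast_sub, Finset.card_image_of_injective _ σ.injective]
    · apply Finset.card_le_card
      intro x hx
      exact Finset.mem_image.2 ⟨_, hσ.1 x hx, by simp⟩
    · intro x hx
      exact Finset.mem_image.2 ⟨_, hσ.1 x hx, by simp⟩

theorem cnt_empty {α β : Type} [Fintype α] [Fintype β] (P : Finset α) :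
    cnt P (∅ : Finset β) ∅ = Fintype.card (α ≃ β) := by
  simp [cnt, Finset.card_univ]

/-- pattern probability -/
noncomputable def q (N m : ℕ) (s t : ℕ) : ℝ :=
  (∏ i ∈ Finset.range s, ((m : ℝ) - i) / (N - i)) *
    ∏ j ∈ Finset.range t, ((N : ℝ) - m - j) / (N - s - j)

theorem cnt_formula {α β : Type} [Fintype α] [Fintype β] (P : Finset α) (S T : Finset β)
    (hST : Disjoint S T) (hc : Fintype.card α = Fintype.card β) :
    (cnt P S T : ℝ) / Fintype.card (α ≃ β) = q (Fintype.card β) P.card S.card T.card := by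
  have hpos : (0 : ℝ) < Fintype.card (α ≃ β) := by
    have : Nonempty (α ≃ β) := Fintype.card_eq.1 hc
    exact_mod_cast Fintype.card_pos
  have hS : (cnt P S ∅ : ℝ) / Fintype.card (α ≃ β) = q (Fintype.card β) P.card S.card 0 := by
    clear hST
    induction S using Finset.induction_on with
    | empty => simp [cnt_empty, q, hpos.ne']
    | insert e S he ih =>
      have h := cnt_step P S ∅ (by simp) e he (by simp)
      have hlt : S.card < Fintype.card β := by
        have := Finset.card_le_univ (insert e S)
        rw [Finset.card_insert_of_notMem he] at this
        omega
      have hlt' : (S.card : ℝ) < Fintype.card β := by exact_mod_cast hlt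
      have hne : (Fintype.card β : ℝ) - S.card ≠ 0 := by linarith
      simp only [Finset.card_empty, Nat.cast_zero, sub_zero] at h
      rw [Finset.card_insert_of_notMem he]
      simp only [q, Finset.prod_range_zero, mul_one] at ih ⊢
      rw [Finset.prod_range_succ, ← ih]
      field_simp
      linarith
  induction T using Finset.induction_on with
  | empty => simpa using hS
  | insert e T he ih =>
    rw [Finset.disjoint_insert_right] at hST
    have ih := ih hST.2
    have h := cnt_step Pᶜ T S hST.2.symm e he hST.1
    rw [← cnt_symm, ← cnt_symm] at h
    have hlt : S.card + T.card < Fintype.card β := by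
      have := Finset.card_le_univ (insert e (S ∪ T))
      rw [Finset.card_insert_of_notMem (by simp [hST.1, he]),
        Finset.card_union_of_disjoint hST.2] at this
      omega
    have hlt' : (S.card : ℝ) + T.card < Fintype.card β := by exact_mod_cast hlt
    have hne : (Fintype.card β : ℝ) - S.card - T.card ≠ 0 := by linarith
    have hPc : ((Pᶜ.card : ℕ) : ℝ) = (Fintype.card β : ℝ) - P.card := by
      rw [Finset.card_compl, Nat.cast_sub (Finset.card_le_univ _), hc]
    rw [hPc] at h
    rw [Finset.card_insert_of_notMem he]
    simp only [q] at ih ⊢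
    rw [Finset.prod_range_succ, ← mul_assoc, ← ih]
    field_simp
    linarith

end generic

section prob

theorem card_edge (n : ℕ) : Fintype.card (EdgeType n) = numEdges n := by
  have := Sym2.card_subtype_not_diag (α := Fin n)
  simp only [Fintype.card_fin, Nat.choose_two_right] at this
  unfold numEdges
  rw [← this]

theorem card_ord_pos (n : ℕ) : (0 : ℝ) < Fintype.card (Ord n) := by
  have : Nonempty (Ord n) := Fintype.card_eq.1 (by rw [card_edge]; simp)
  exact_mod_cast Fintype.card_pos

theorem Pr_nonneg {n : ℕ} (p : Ord n → Prop) : 0 ≤ Pr p := by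
  unfold Pr; positivity

theorem Pr_mono {n : ℕ} {p r : Ord n → Prop} (h : ∀ σ, p σ → r σ) : Pr p ≤ Pr r := by
  classical
  unfold Pr
  apply div_le_div_of_nonneg_right _ (card_ord_pos n).le
  exact_mod_cast Finset.card_le_card (Finset.monotone_filter_right _ (fun σ _ hσ => h σ hσ))

theorem Pr_eq_sum {n : ℕ} (p : Ord n → Prop) [DecidablePred p] :
    Pr p = (∑ σ : Ord n, if p σ then (1 : ℝ) else 0) / Fintype.card (Ord n) := by
  classical
  unfold Pr
  rw [Finset.sum_boole]
  congr!

theorem Pr_le_one {n : ℕ} (p : Ord n → Prop) : Pr p ≤ 1 := by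
  classical
  unfold Pr
  rw [div_le_one (card_ord_pos n)]
  exact_mod_cast Finset.card_le_univ _

theorem Pr_not {n : ℕ} (p : Ord n → Prop) : Pr p = 1 - Pr (fun σ => ¬ p σ) := by
  classical
  have h := card_ord_pos n
  rw [Pr_eq_sum, Pr_eq_sum, eq_sub_iff_add_eq, ← add_div, ← Finset.sum_add_distrib,
    div_eq_one_iff_eq h.ne']
  rw [Finset.sum_congr rfl (g := fun _ => (1 : ℝ))]
  · simp
  · intro σ _
    by_cases hp : p σ <;> simp [hp]

theorem Pr_or {n : ℕ} (p r : Ord n → Prop) : Pr (fun σ => p σ ∨ r σ) ≤ Pr p + Pr r := by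
  classical
  have h := card_ord_pos n
  rw [Pr_eq_sum, Pr_eq_sum, Pr_eq_sum, ← add_div, ← Finset.sum_add_distrib]
  apply div_le_div_of_nonneg_right _ h.le
  apply Finset.sum_le_sum
  intro σ _
  by_cases hp : p σ <;> by_cases hr : r σ <;> simp [hp, hr]

theorem Pr_exists {n : ℕ} {ι : Type} (I : Finset ι) (A : ι → Ord n → Prop) :
    Pr (fun σ => ∃ i ∈ I, A i σ) ≤ ∑ i ∈ I, Pr (A i) := by
  classical
  induction I using Finset.induction_on with
  | empty => simp [Pr]
  | insert a I ha ih =>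
    rw [Finset.sum_insert ha]
    refine le_trans ?_ (add_le_add_right ih _)
    refine le_trans (Pr_mono ?_) (Pr_or _ _)
    intro σ
    simp

theorem second_moment {n : ℕ} {ι : Type} (I : Finset ι) (A : ι → Ord n → Prop) :
    Pr (fun σ => ∀ i ∈ I, ¬ A i σ) * (∑ i ∈ I, Pr (A i)) ^ 2
      ≤ ∑ i ∈ I, ∑ j ∈ I, Pr (fun σ => A i σ ∧ A j σ) - (∑ i ∈ I, Pr (A i)) ^ 2 := by
  classical
  have h := card_ord_pos n
  set K : ℝ := ((Fintype.card (Ord n) : ℕ) : ℝ) with hK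
  set μ := ∑ i ∈ I, Pr (A i) with hμ
  let X : Ord n → ℝ := fun σ => ∑ i ∈ I, if A i σ then (1 : ℝ) else 0
  have h1 : ∑ σ, X σ = K * μ := by
    simp only [X, hμ]
    rw [Finset.sum_comm, Finset.mul_sum]
    apply Finset.sum_congr rfl
    intro i _
    rw [Pr_eq_sum, ← hK]
    field_simp
  have h2 : ∑ σ, X σ ^ 2 = K * ∑ i ∈ I, ∑ j ∈ I, Pr (fun σ => A i σ ∧ A j σ) := by
    have : ∀ σ, X σ ^ 2 = ∑ i ∈ I, ∑ j ∈ I, if A i σ ∧ A j σ then (1 : ℝ) else 0 := by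
      intro σ
      simp only [X]
      rw [pow_two, Finset.sum_mul_sum]
      refine Finset.sum_congr rfl fun i _ => Finset.sum_congr rfl fun j _ => ?_
      by_cases ha : A i σ <;> by_cases hb : A j σ <;> simp [ha, hb]
    rw [Finset.sum_congr rfl (fun σ _ => this σ), Finset.sum_comm, Finset.mul_sum]
    apply Finset.sum_congr rfl
    intro i _
    rw [Finset.sum_comm, Finset.mul_sum]
    apply Finset.sum_congr rfl
    intro j _
    rw [Pr_eq_sum, ← hK]
    field_simp
  have h3 : ∑ σ, (X σ - μ) ^ 2
      = K * (∑ i ∈ I, ∑ j ∈ I, Pr (fun σ => A i σ ∧ A j σ) - μ ^ 2) := by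
    have : ∀ σ, (X σ - μ) ^ 2 = X σ ^ 2 - 2 * μ * X σ + μ ^ 2 := fun σ => by ring
    rw [Finset.sum_congr rfl (fun σ _ => this σ), Finset.sum_add_distrib,
      Finset.sum_sub_distrib, ← Finset.mul_sum, h1, h2, Finset.sum_const, nsmul_eq_mul,
      Finset.card_univ, ← hK]
    ring
  have h4 : (∑ σ : Ord n, if ∀ i ∈ I, ¬ A i σ then (1 : ℝ) else 0) * μ ^ 2
      ≤ ∑ σ, (X σ - μ) ^ 2 := by
    rw [Finset.sum_mul]
    apply Finset.sum_le_sum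
    intro σ _
    by_cases hp : ∀ i ∈ I, ¬ A i σ
    · have : X σ = 0 := Finset.sum_eq_zero fun i hi => by simp [hp i hi]
      rw [if_pos hp, this]
      simp
    · rw [if_neg hp]
      simp only [zero_mul]
      positivity
  rw [h3] at h4
  rw [Pr_eq_sum, ← hK]
  rw [div_mul_eq_mul_div, div_le_iff₀ h]
  linarith

theorem Pr_pattern {n : ℕ} (P : Finset (Fin (numEdges n))) (S T : Finset (EdgeType n))
    (hST : Disjoint S T) :
    Pr (fun σ : Ord n => (∀ e ∈ S, σ.symm e ∈ P) ∧ ∀ e ∈ T, σ.symm e ∉ P)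
      = q (numEdges n) P.card S.card T.card := by
  have := cnt_formula P S T hST (by rw [card_edge]; simp)
  rw [card_edge] at this
  rw [← this]
  unfold Pr cnt
  congr!

end prob

section edges

/-- edges at `v` -/
def Dv {n : ℕ} (v : Fin n) : Finset (EdgeType n) := Finset.univ.filter (fun e => v ∈ e.1)

/-- edges between `v` and `B` -/
def DB {n : ℕ} (B : Finset (Fin n)) (v : Fin n) : Finset (EdgeType n) :=
  Finset.univ.filter (fun e => ∃ w ∈ B, e.1 = s(v, w))

theorem card_DB {n : ℕ} (B : Finset (Fin n)) (v : Fin n) (hv : v ∉ B) :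
    (DB B v).card = B.card := by
  symm
  apply Finset.card_bij (fun w hw => (⟨s(v, w), by
    rw [Sym2.mk_isDiag_iff]; rintro rfl; exact hv hw⟩ : EdgeType n))
  · intro w hw
    simp only [DB, Finset.mem_filter, Finset.mem_univ, true_and]
    exact ⟨w, hw, rfl⟩
  · intro a ha b hb h
    have h' : a = b ∨ v = b ∧ a = v := by simpa using h
    rcases h' with h' | h'
    · exact h'
    · exact absurd (h'.1 ▸ hb) hv
  · intro e he
    simp only [DB, Finset.mem_filter, Finset.mem_univ, true_and] at he
    obtain ⟨w, hw, h⟩ := he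
    exact ⟨w, hw, Subtype.ext h.symm⟩

theorem Dv_eq {n : ℕ} (v : Fin n) : Dv v = DB (Finset.univ.erase v) v := by
  ext ⟨e, he⟩
  simp only [Dv, DB, Finset.mem_filter, Finset.mem_univ, true_and, Finset.mem_erase, and_true]
  constructor
  · intro h
    obtain ⟨w, rfl⟩ := Sym2.mem_iff_exists.1 h
    refine ⟨w, ?_, rfl⟩
    rintro rfl
    exact he (by simp)
  · rintro ⟨w, _, rfl⟩
    simp

theorem card_Dv {n : ℕ} (v : Fin n) : (Dv v).card = n - 1 := by
  rw [Dv_eq, card_DB _ _ (by simp)]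
  simp

theorem DB_subset {n : ℕ} (B : Finset (Fin n)) (v : Fin n) : DB B v ⊆ Dv v := by
  intro e he
  simp only [Dv, DB, Finset.mem_filter, Finset.mem_univ, true_and] at he ⊢
  obtain ⟨w, _, h⟩ := he
  simp [h]

theorem DB_disj {n : ℕ} (B : Finset (Fin n)) (u v : Fin n) (huv : u ≠ v) (hu : u ∉ B) :
    Disjoint (DB B v) (Dv u) := by
  rw [Finset.disjoint_left]
  intro e he he'
  simp only [Dv, DB, Finset.mem_filter, Finset.mem_univ, true_and] at he he'
  obtain ⟨w, hw, h⟩ := he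
  rw [h, Sym2.mem_iff] at he'
  rcases he' with h | h
  · exact huv h
  · exact hu (h ▸ hw)

theorem card_Dv_inter {n : ℕ} (u v : Fin n) (huv : u ≠ v) : (Dv v ∩ Dv u).card = 1 := by
  rw [Finset.card_eq_one]
  refine ⟨⟨s(u, v), by simpa using huv⟩, ?_⟩
  ext ⟨e, he⟩
  simp only [Dv, Finset.mem_inter, Finset.mem_filter, Finset.mem_univ, true_and,
    Finset.mem_singleton, Subtype.mk.injEq]
  rw [and_comm]
  exact Sym2.mem_and_mem_iff huv

theorem deg_proc {n : ℕ} (σ : Ord n) (m : ℕ) (v : Fin n) :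
    deg (procEdges σ m) v = ((Dv v).filter (fun e => (σ.symm e : ℕ) < m)).card := by
  unfold deg procEdges
  symm
  apply Finset.card_bij (fun e _ => e.1)
  · intro e he
    simp only [Dv, Finset.mem_filter, Finset.mem_univ, true_and, Finset.mem_image] at he ⊢
    exact ⟨⟨σ.symm e, he.2, by simp⟩, he.1⟩
  · intro a _ b _ h
    exact Subtype.ext h
  · intro e he
    simp only [Dv, Finset.mem_filter, Finset.mem_univ, true_and, Finset.mem_image] at he ⊢
    obtain ⟨⟨i, hi, rfl⟩, hv⟩ := he
    exact ⟨σ i, ⟨hv, by simpa using hi⟩, rfl⟩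

theorem lt_tau {n : ℕ} (σ : Ord n) (k m : ℕ) (hn : k ≤ n - 1) (v : Fin n)
    (hv : deg (procEdges σ m) v < k) : m < tau k σ := by
  have hne : {m | ∀ v : Fin n, k ≤ deg (procEdges σ m) v}.Nonempty := by
    refine ⟨numEdges n, fun w => ?_⟩
    rw [deg_proc, Finset.filter_true_of_mem (fun e _ => (σ.symm e).2), card_Dv]
    exact hn
  have hmem : ∀ v : Fin n, k ≤ deg (procEdges σ (tau k σ)) v := Nat.sInf_mem hne
  by_contra hcon
  push Not at hcon
  have h1 := hmem v
  have : deg (procEdges σ (tau k σ)) v ≤ deg (procEdges σ m) v := by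
    rw [deg_proc, deg_proc]
    apply Finset.card_le_card
    apply Finset.monotone_filter_right
    intro e _ h
    exact lt_of_lt_of_le h hcon
  omega

end edges

section combine

/-- initial positions -/
def Pset (n m : ℕ) : Finset (Fin (numEdges n)) := Finset.univ.filter (fun i => (i : ℕ) < m)

/-- positions in an interval -/
def Pint (n M m : ℕ) : Finset (Fin (numEdges n)) :=
  Finset.univ.filter (fun i => M ≤ (i : ℕ) ∧ (i : ℕ) < m)

theorem card_Pint (n M m : ℕ) (hm : m ≤ numEdges n) : (Pint n M m).card = m - M := by
  rw [← Nat.card_Ico M m]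
  apply Finset.card_bij (fun (i : Fin (numEdges n)) _ => (i : ℕ))
  · intro i hi
    simpa [Pint] using hi
  · intro a _ b _ h
    exact Fin.ext h
  · intro b hb
    rw [Finset.mem_Ico] at hb
    exact ⟨⟨b, by omega⟩, by simpa [Pint] using hb, rfl⟩

theorem card_Pset (n m : ℕ) (hm : m ≤ numEdges n) : (Pset n m).card = m := by
  have := card_Pint n 0 m hm
  simpa [Pint, Pset] using this

theorem q_nonneg_of_pattern {n : ℕ} (P : Finset (Fin (numEdges n))) (S T : Finset (EdgeType n))
    (hST : Disjoint S T) : 0 ≤ q (numEdges n) P.card S.card T.card := by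
  rw [← Pr_pattern P S T hST]; exact Pr_nonneg _

/-- the event that the `P`-edges at `v` are exactly `S` -/
def Ev {n : ℕ} (P : Finset (Fin (numEdges n))) (x : Σ _ : Fin n, Finset (EdgeType n))
    (σ : Ord n) : Prop :=
  (∀ e ∈ x.2, σ.symm e ∈ P) ∧ ∀ e ∈ Dv x.1 \ x.2, σ.symm e ∉ P

theorem Pr_Ev {n : ℕ} (P : Finset (Fin (numEdges n))) (v : Fin n) (S : Finset (EdgeType n))
    (hS : S ⊆ Dv v) :
    Pr (Ev P ⟨v, S⟩) = q (numEdges n) P.card S.card (n - 1 - S.card) := by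
  have := Pr_pattern P S (Dv v \ S) Finset.disjoint_sdiff
  rw [Finset.card_sdiff_of_subset hS, card_Dv] at this
  exact this

theorem Ev_unique {n : ℕ} (P : Finset (Fin (numEdges n))) (v : Fin n)
    (S S' : Finset (EdgeType n)) (hS : S ⊆ Dv v) (hS' : S' ⊆ Dv v) (σ : Ord n)
    (h : Ev P ⟨v, S⟩ σ) (h' : Ev P ⟨v, S'⟩ σ) : S = S' := by
  have key : ∀ S S' : Finset (EdgeType n), S ⊆ Dv v → Ev P ⟨v, S⟩ σ → Ev P ⟨v, S'⟩ σ →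
      S ⊆ S' := by
    intro S S' hS h h' e he
    by_contra hc
    exact h'.2 e (Finset.mem_sdiff.2 ⟨hS he, hc⟩) (h.1 e he)
  exact Finset.Subset.antisymm (key _ _ hS h h') (key _ _ hS' h' h)

theorem Pr_Ev_pair {n k : ℕ} (P : Finset (Fin (numEdges n))) (B : Finset (Fin n))
    (u v : Fin n) (huv : u ≠ v) (hu : u ∉ B) (hv : v ∉ B)
    (S S' : Finset (EdgeType n)) (hS : S ⊆ DB B u) (hS' : S' ⊆ DB B v)
    (hc : S.card = k) (hc' : S'.card = k) :
    Pr (fun σ => Ev P ⟨u, S⟩ σ ∧ Ev P ⟨v, S'⟩ σ)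
      = q (numEdges n) P.card (k + k) ((n - 1 - k) + (n - 1 - k) - 1) := by
  have d1 : Disjoint S (Dv v) := (DB_disj B v u huv.symm hv).mono_left hS
  have d2 : Disjoint S' (Dv u) := (DB_disj B u v huv hu).mono_left hS'
  have s1 : S ⊆ Dv u := hS.trans (DB_subset _ _)
  have s2 : S' ⊆ Dv v := hS'.trans (DB_subset _ _)
  have d3 : Disjoint S S' := d1.mono_right s2
  have d4 : Disjoint (S ∪ S') ((Dv u \ S) ∪ (Dv v \ S')) := by
    rw [Finset.disjoint_union_left, Finset.disjoint_union_right, Finset.disjoint_union_right]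
    refine ⟨⟨Finset.disjoint_sdiff, d1.mono_right Finset.sdiff_subset⟩,
      d2.mono_right Finset.sdiff_subset, Finset.disjoint_sdiff⟩
  have h := Pr_pattern P _ _ d4
  have e1 : (S ∪ S').card = k + k := by rw [Finset.card_union_of_disjoint d3, hc, hc']
  have e2 : ((Dv u \ S) ∪ (Dv v \ S')).card = (n - 1 - k) + (n - 1 - k) - 1 := by
    have hi : (Dv u \ S) ∩ (Dv v \ S') = Dv u ∩ Dv v := by
      ext e
      simp only [Finset.mem_inter, Finset.mem_sdiff]
      constructor
      · tauto
      · rintro ⟨a, b⟩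
        exact ⟨⟨a, fun h => Finset.disjoint_left.1 d1 h b⟩,
          ⟨b, fun h => Finset.disjoint_left.1 d2 h a⟩⟩
    rw [Finset.card_union, hi, card_Dv_inter v u huv.symm, Finset.card_sdiff_of_subset s1,
      Finset.card_sdiff_of_subset s2, card_Dv, card_Dv, hc, hc']
  rw [e1, e2] at h
  rw [← h]
  congr 1
  ext σ
  simp only [Ev, Finset.mem_union]
  constructor
  · rintro ⟨⟨a, b⟩, c, d⟩
    exact ⟨fun e he => he.elim (a e) (c e), fun e he => he.elim (b e) (d e)⟩
  · rintro ⟨a, b⟩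
    exact ⟨⟨fun e he => a e (Or.inl he), fun e he => b e (Or.inl he)⟩,
      fun e he => a e (Or.inr he), fun e he => b e (Or.inr he)⟩

theorem bound_tau {n k m : ℕ} (hm : m ≤ numEdges n) (hq2 : 0 ≤ q (numEdges n) m (k + k) ((n - 1 - k) + (n - 1 - k) - 1))
    (L : ℝ) (hL : L = ((n / 2 : ℕ) : ℝ) * ((n - n / 2).choose k : ℕ)) :
    Pr (fun σ : Ord n => ∀ v, k + 1 ≤ deg (procEdges σ m) v) *
        (L * q (numEdges n) m k (n - 1 - k)) ^ 2 ≤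
      L * q (numEdges n) m k (n - 1 - k)
      + L ^ 2 * q (numEdges n) m (k + k) ((n - 1 - k) + (n - 1 - k) - 1)
      - (L * q (numEdges n) m k (n - 1 - k)) ^ 2 := by
  classical
  set q1 := q (numEdges n) m k (n - 1 - k) with hq1d
  set q2 := q (numEdges n) m (k + k) ((n - 1 - k) + (n - 1 - k) - 1) with hq2d
  let A : Finset (Fin n) := Finset.univ.filter (fun v => (v : ℕ) < n / 2)
  let B : Finset (Fin n) := Aᶜ
  have hA : A.card = n / 2 := by
    have : n / 2 ≤ n := Nat.div_le_self _ _
    simp only [A]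
    rw [Fin.card_filter_val_lt]
    omega
  have hB : B.card = n - n / 2 := by
    simp only [B]
    rw [Finset.card_compl, hA, Fintype.card_fin]
  let I : Finset (Σ _ : Fin n, Finset (EdgeType n)) :=
    A.sigma (fun v => Finset.powersetCard k (DB B v))
  have hI : (I.card : ℝ) = L := by
    simp only [I]
    rw [Finset.card_sigma, hL, Finset.sum_congr rfl (g := fun _ => (n - n / 2).choose k)]
    · rw [Finset.sum_const, hA]; simp
    · intro v hv
      rw [Finset.card_powersetCard, card_DB _ _ (by simpa [B] using hv), hB]
  have hPc := card_Pset n m hm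
  have hmem : ∀ x ∈ I, x.1 ∉ B ∧ x.2 ⊆ DB B x.1 ∧ x.2.card = k := by
    intro x hx
    simp only [I, Finset.mem_sigma, Finset.mem_powersetCard] at hx
    exact ⟨by simpa [B] using hx.1, hx.2⟩
  have hsingle : ∀ x ∈ I, Pr (Ev (Pset n m) x) = q1 := by
    rintro ⟨v, S⟩ hx
    obtain ⟨_, h2, h3⟩ := hmem _ hx
    simp only at h2 h3
    rw [Pr_Ev _ _ _ (h2.trans (DB_subset _ _)), h3, hPc]
  have hpair : ∀ x ∈ I, ∀ y ∈ I, Pr (fun σ => Ev (Pset n m) x σ ∧ Ev (Pset n m) y σ)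
      ≤ (if x = y then q1 else 0) + q2 := by
    intro x hx y hy
    by_cases hxy : x = y
    · subst hxy
      rw [if_pos rfl, ← hsingle x hx]
      have : Pr (fun σ => Ev (Pset n m) x σ ∧ Ev (Pset n m) x σ) ≤ Pr (Ev (Pset n m) x) :=
        Pr_mono (fun σ h => h.1)
      linarith
    · rw [if_neg hxy, zero_add]
      obtain ⟨v, S⟩ := x
      obtain ⟨u, S'⟩ := y
      obtain ⟨h1, h2, h3⟩ := hmem _ hx
      obtain ⟨h1', h2', h3'⟩ := hmem _ hy
      simp only at h1 h2 h3 h1' h2' h3'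
      by_cases huv : v = u
      · subst huv
        have : Pr (fun σ => Ev (Pset n m) ⟨v, S⟩ σ ∧ Ev (Pset n m) ⟨v, S'⟩ σ)
            ≤ Pr (fun _ : Ord n => False) := by
          apply Pr_mono
          rintro σ ⟨a, b⟩
          exact hxy (by rw [Ev_unique _ _ _ _ (h2.trans (DB_subset _ _))
            (h2'.trans (DB_subset _ _)) σ a b])
        refine this.trans (le_trans (le_of_eq ?_) hq2)
        simp [Pr]
      · rw [Pr_Ev_pair _ B v u huv h1 h1' S S' h2 h2' h3 h3', hPc]
  have hs := second_moment I (Ev (Pset n m))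
  rw [Finset.sum_congr rfl hsingle, Finset.sum_const, nsmul_eq_mul, hI] at hs
  have hd : ∑ i ∈ I, ∑ j ∈ I, Pr (fun σ => Ev (Pset n m) i σ ∧ Ev (Pset n m) j σ)
      ≤ L * q1 + L ^ 2 * q2 := by
    calc _ ≤ ∑ i ∈ I, ∑ j ∈ I, ((if i = j then q1 else 0) + q2) :=
          Finset.sum_le_sum fun i hi => Finset.sum_le_sum fun j hj => hpair i hi j hj
      _ = ∑ i ∈ I, (q1 + L * q2) := by
          refine Finset.sum_congr rfl fun i hi => ?_
          rw [Finset.sum_add_distrib, Finset.sum_ite_eq, if_pos hi, Finset.sum_const,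
            nsmul_eq_mul, hI]
      _ = _ := by rw [Finset.sum_const, nsmul_eq_mul, hI]; ring
  have hmon : Pr (fun σ : Ord n => ∀ v, k + 1 ≤ deg (procEdges σ m) v)
      ≤ Pr (fun σ => ∀ i ∈ I, ¬ Ev (Pset n m) i σ) := by
    apply Pr_mono
    rintro σ hσ ⟨v, S⟩ hx hE
    obtain ⟨h1, h2, h3⟩ := hmem _ hx
    simp only at h1 h2 h3
    have := hσ v
    rw [deg_proc] at this
    have hle : ((Dv v).filter (fun e => (σ.symm e : ℕ) < m)).card ≤ S.card := by
      apply Finset.card_le_card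
      intro e he
      rw [Finset.mem_filter] at he
      by_contra hc
      exact hE.2 e (Finset.mem_sdiff.2 ⟨he.1, hc⟩) (by simpa [Pset] using he.2)
    omega
  have := mul_le_mul_of_nonneg_right hmon (sq_nonneg (L * q1))
  linarith

theorem bound_int {n k M m : ℕ} (hm : m ≤ numEdges n) :
    Pr (fun σ : Ord n => ∃ v : Fin n, ((Finset.univ : Finset (Fin (numEdges n))).filter
            (fun i : Fin (numEdges n) => M ≤ (i : ℕ) ∧ (i : ℕ) < m ∧
              v ∈ ((σ i : EdgeType n) : Sym2 (Fin n)))).card < k)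
      ≤ n * ∑ j ∈ Finset.range k, ((n - 1).choose j : ℝ) * q (numEdges n) (m - M) j (n - 1 - j) := by
  classical
  let I : Finset (Σ _ : Fin n, Finset (EdgeType n)) :=
    Finset.univ.sigma (fun v => (Finset.range k).biUnion fun j => Finset.powersetCard j (Dv v))
  have h1 : Pr (fun σ : Ord n => ∃ v : Fin n, ((Finset.univ : Finset (Fin (numEdges n))).filter
            (fun i : Fin (numEdges n) => M ≤ (i : ℕ) ∧ (i : ℕ) < m ∧
              v ∈ ((σ i : EdgeType n) : Sym2 (Fin n)))).card < k)
      ≤ Pr (fun σ => ∃ x ∈ I, Ev (Pint n M m) x σ) := by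
    apply Pr_mono
    rintro σ ⟨v, hv⟩
    refine ⟨⟨v, (Dv v).filter (fun e => σ.symm e ∈ Pint n M m)⟩, ?_, ?_⟩
    · simp only [I, Finset.mem_sigma, Finset.mem_univ, true_and, Finset.mem_biUnion,
        Finset.mem_range, Finset.mem_powersetCard]
      refine ⟨_, ?_, Finset.filter_subset _ _, rfl⟩
      refine lt_of_le_of_lt ?_ hv
      apply Finset.card_le_card_of_injOn (fun e => σ.symm e)
      · intro e he
        simp only [Finset.coe_filter, Set.mem_ofPred_eq, Pint, Dv, Finset.mem_filter,
          Finset.mem_univ, true_and] at he ⊢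
        refine ⟨he.2.1, he.2.2, by simpa using he.1⟩
      · exact σ.symm.injective.injOn
    · refine ⟨fun e he => (Finset.mem_filter.1 he).2, fun e he hc => ?_⟩
      rw [Finset.mem_sdiff] at he
      exact he.2 (Finset.mem_filter.2 ⟨he.1, hc⟩)
  refine h1.trans ((Pr_exists _ _).trans (le_of_eq ?_))
  rw [Finset.sum_sigma]
  rw [Finset.sum_congr rfl (g := fun _ => ∑ j ∈ Finset.range k,
    ((n - 1).choose j : ℝ) * q (numEdges n) (m - M) j (n - 1 - j))]
  · simp
  · intro v _
    rw [Finset.sum_biUnion]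
    · refine Finset.sum_congr rfl fun j _ => ?_
      rw [Finset.sum_congr rfl (g := fun _ => q (numEdges n) (m - M) j (n - 1 - j))]
      · rw [Finset.sum_const, Finset.card_powersetCard, card_Dv, nsmul_eq_mul]
      · intro S hS
        rw [Finset.mem_powersetCard] at hS
        rw [Pr_Ev _ _ _ hS.1, hS.2, card_Pint _ _ _ hm]
    · intro i _ j _ hij
      exact Finset.pairwise_disjoint_powersetCard _ hij

end combine

section qbounds

theorem q_upper (N m j t : ℕ) (hj : j ≤ m) (hmt : m + t < N) :
    q N m j t ≤ ((m : ℝ) / N) ^ j * Real.exp (-(((m : ℝ) - j) * t / N)) := by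
  have hj' : (j : ℝ) ≤ m := by exact_mod_cast hj
  have hmt' : (m : ℝ) + t < N := by exact_mod_cast hmt
  have hm0 : (0 : ℝ) ≤ m := by positivity
  have ht0 : (0 : ℝ) ≤ t := by positivity
  have hj0 : (0 : ℝ) ≤ j := by positivity
  have hN : (0 : ℝ) < N := by linarith
  unfold q
  have h1 : ∏ i ∈ Finset.range j, ((m : ℝ) - i) / (N - i) ≤ ((m : ℝ) / N) ^ j := by
    rw [← Finset.card_range j, ← Finset.prod_const, Finset.card_range]
    apply Finset.prod_le_prod
    · intro i hi
      have : (i : ℝ) < j := by exact_mod_cast Finset.mem_range.1 hi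
      apply div_nonneg <;> linarith
    · intro i hi
      have : (i : ℝ) < j := by exact_mod_cast Finset.mem_range.1 hi
      have i0 : (0 : ℝ) ≤ i := by positivity
      rw [div_le_div_iff₀ (by linarith) hN]
      nlinarith
  have h2 : ∏ i ∈ Finset.range t, ((N : ℝ) - m - i) / (N - j - i)
      ≤ Real.exp (-(((m : ℝ) - j) * t / N)) := by
    have : Real.exp (-(((m : ℝ) - j) * t / N)) = ∏ i ∈ Finset.range t, Real.exp (-(((m : ℝ) - j) / N)) := by
      rw [Finset.prod_const, Finset.card_range, ← Real.exp_nat_mul]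
      congr 1; ring
    rw [this]
    apply Finset.prod_le_prod
    · intro i hi
      have : (i : ℝ) < t := by exact_mod_cast Finset.mem_range.1 hi
      apply div_nonneg <;> linarith
    · intro i hi
      have : (i : ℝ) < t := by exact_mod_cast Finset.mem_range.1 hi
      have i0 : (0 : ℝ) ≤ i := by positivity
      have e1 : ((N : ℝ) - m - i) / (N - j - i) ≤ 1 - ((m : ℝ) - j) / N := by
        have hN' : 1 - ((m : ℝ) - j) / N = (N - (m - j)) / N := by field_simp
        rw [hN', div_le_div_iff₀ (by linarith) hN]
        nlinarith [mul_nonneg (sub_nonneg.2 hj') (by linarith : (0 : ℝ) ≤ j + i)]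
      refine e1.trans ?_
      have := Real.add_one_le_exp (-(((m : ℝ) - j) / N))
      linarith
  apply mul_le_mul h1 h2
  · apply Finset.prod_nonneg
    intro i hi
    have : (i : ℝ) < t := by exact_mod_cast Finset.mem_range.1 hi
    apply div_nonneg <;> linarith
  · positivity

theorem q_lower (N m k t : ℕ) (hk : k ≤ m) (hmt : m + t < N) :
    (((m : ℝ) - k) / N) ^ k * Real.exp (-(t * m / (N - m - t))) ≤ q N m k t := by
  have hk' : (k : ℝ) ≤ m := by exact_mod_cast hk
  have hmt' : (m : ℝ) + t < N := by exact_mod_cast hmt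
  have hm0 : (0 : ℝ) ≤ m := by positivity
  have ht0 : (0 : ℝ) ≤ t := by positivity
  have hk0 : (0 : ℝ) ≤ k := by positivity
  have hN : (0 : ℝ) < N := by linarith
  unfold q
  have h1 : (((m : ℝ) - k) / N) ^ k ≤ ∏ i ∈ Finset.range k, ((m : ℝ) - i) / (N - i) := by
    rw [← Finset.card_range k, ← Finset.prod_const, Finset.card_range]
    apply Finset.prod_le_prod
    · intro i hi
      apply div_nonneg <;> linarith
    · intro i hi
      have : (i : ℝ) < k := by exact_mod_cast Finset.mem_range.1 hi
      have i0 : (0 : ℝ) ≤ i := by positivity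
      apply div_le_div₀ <;> linarith
  have h2 : Real.exp (-(t * m / (N - m - t)))
      ≤ ∏ i ∈ Finset.range t, ((N : ℝ) - m - i) / (N - k - i) := by
    have : Real.exp (-((t : ℝ) * m / (N - m - t)))
        = ∏ i ∈ Finset.range t, Real.exp (-((m : ℝ) / (N - m - t))) := by
      rw [Finset.prod_const, Finset.card_range, ← Real.exp_nat_mul]
      congr 1; ring
    rw [this]
    apply Finset.prod_le_prod
    · intro i hi; positivity
    · intro i hi
      have : (i : ℝ) < t := by exact_mod_cast Finset.mem_range.1 hi
      have i0 : (0 : ℝ) ≤ i := by positivity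
      rw [Real.exp_neg, inv_le_comm₀ (Real.exp_pos _) (div_pos (by linarith) (by linarith)),
        inv_div]
      have := Real.add_one_le_exp ((m : ℝ) / (N - m - t))
      refine le_trans ?_ this
      have e : ((N : ℝ) - k - i) / (N - m - i) = (m - k) / (N - m - i) + 1 := by
        rw [div_add_one (by linarith)]; ring
      rw [e]
      have : ((m : ℝ) - k) / (N - m - i) ≤ m / (N - m - t) := by
        apply div_le_div₀ <;> linarith
      linarith
  exact mul_le_mul h1 h2 (Real.exp_pos _).le (le_trans (by have : 0 ≤ ((m : ℝ) - k) / N := div_nonneg (by linarith) hN.le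
                                                           positivity) h1)

theorem q_nonneg (N m k t : ℕ) (hk : k ≤ m) (hmt : m + t < N) : 0 ≤ q N m k t := by
  refine le_trans ?_ (q_lower N m k t hk hmt)
  have hk' : (k : ℝ) ≤ m := by exact_mod_cast hk
  have : 0 ≤ ((m : ℝ) - k) / N := div_nonneg (by linarith) (by positivity)
  positivity

theorem q_pair (N m k r : ℕ) (hk : 2 * k ≤ m) (hmt : m + (2 * r + 1) < N)
    (hkey : k * N + (r + 1) * k ≤ m * (k + (r + 1))) (hroom : m + 2 * k + (r + 1) < N) :
    q N m (k + k) (r + 1 + r) ≤ q N m k (r + 1) ^ 2 *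
      Real.exp ((k * (r + 1) + m) / (N - m - 2 * k - (r + 1))) := by
  have hk' : 2 * (k : ℝ) ≤ m := by exact_mod_cast hk
  have hmt' : (m : ℝ) + (2 * r + 1) < N := by exact_mod_cast hmt
  have hroom' : (m : ℝ) + 2 * k + (r + 1) < N := by exact_mod_cast hroom
  have hkey' : (k : ℝ) * N + (r + 1) * k ≤ m * (k + (r + 1)) := by exact_mod_cast hkey
  have hm0 : (0 : ℝ) ≤ m := by positivity
  have hr0 : (0 : ℝ) ≤ r := by positivity
  have hk0 : (0 : ℝ) ≤ k := by positivity
  have hN : (0 : ℝ) < N := by linarith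
  set a : ℝ := ∏ i ∈ Finset.range k, ((m : ℝ) - i) / (N - i) with ha
  set b : ℝ := ∏ j ∈ Finset.range r, ((N : ℝ) - m - j) / (N - k - j) with hb
  set c : ℝ := ((N : ℝ) - m - r) / (N - k - r) with hc
  have hq1 : q N m k (r + 1) = a * (b * c) := by
    unfold q
    rw [Finset.prod_range_succ]
  have hc0 : 0 < c := div_pos (by linarith) (by linarith)
  have hb0 : 0 ≤ b := by
    apply Finset.prod_nonneg
    intro i hi
    have : (i : ℝ) < r := by exact_mod_cast Finset.mem_range.1 hi
    apply div_nonneg <;> linarith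
  have ha0 : 0 ≤ a := by
    apply Finset.prod_nonneg
    intro i hi
    have : (i : ℝ) < k := by exact_mod_cast Finset.mem_range.1 hi
    apply div_nonneg <;> linarith
  -- the four factors
  have hA : ∏ i ∈ Finset.range (k + k), ((m : ℝ) - i) / (N - i) ≤ a * a := by
    rw [Finset.prod_range_add]
    apply mul_le_mul_of_nonneg_left _ ha0
    apply Finset.prod_le_prod
    · intro i hi
      have : (i : ℝ) < k := by exact_mod_cast Finset.mem_range.1 hi
      push_cast
      apply div_nonneg <;> linarith
    · intro i hi
      have : (i : ℝ) < k := by exact_mod_cast Finset.mem_range.1 hi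
      push_cast
      rw [div_le_div_iff₀ (by linarith) (by linarith)]
      nlinarith [mul_nonneg hk0 (by linarith : (0 : ℝ) ≤ N - m)]
  set D : ℝ := (N : ℝ) - m - 2 * k - (r + 1) with hD
  have hD0 : 0 < D := by linarith
  have hT1 : ∏ j ∈ Finset.range (r + 1), ((N : ℝ) - m - j) / (N - (k + k : ℕ) - j)
      ≤ b * c * Real.exp (k * (r + 1) / D) := by
    have e1 : b * c = ∏ j ∈ Finset.range (r + 1), ((N : ℝ) - m - j) / (N - k - j) := by
      rw [Finset.prod_range_succ]
    have e2 : Real.exp (k * (r + 1) / D) = ∏ j ∈ Finset.range (r + 1), Real.exp (k / D) := by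
      rw [Finset.prod_const, Finset.card_range, ← Real.exp_nat_mul]
      congr 1; push_cast; ring
    rw [e1, e2, ← Finset.prod_mul_distrib]
    apply Finset.prod_le_prod
    · intro i hi
      have : (i : ℝ) < r + 1 := by exact_mod_cast Finset.mem_range.1 hi
      push_cast
      apply div_nonneg <;> linarith
    · intro i hi
      have : (i : ℝ) < r + 1 := by exact_mod_cast Finset.mem_range.1 hi
      push_cast
      have p1 : (0 : ℝ) < N - k - i := by linarith
      have p2 : (0 : ℝ) < N - (k + k) - i := by linarith
      have e : ((N : ℝ) - m - i) / (N - (k + k) - i)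
          = ((N : ℝ) - m - i) / (N - k - i) * (k / (N - (k + k) - i) + 1) := by
        rw [div_add_one p2.ne', div_mul_div_comm, div_eq_div_iff p2.ne' (by positivity)]
        ring
      rw [e]
      apply mul_le_mul_of_nonneg_left _ (div_nonneg (by linarith) p1.le)
      have h1 := Real.add_one_le_exp ((k : ℝ) / D)
      have h2 : (k : ℝ) / (N - (k + k) - i) ≤ k / D := by
        apply div_le_div₀ <;> linarith
      linarith
  have hT2 : ∏ j ∈ Finset.range r, ((N : ℝ) - m - ((r + 1 + j : ℕ) : ℝ)) / (N - (k + k : ℕ) - ((r + 1 + j : ℕ) : ℝ)) ≤ b := by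
    apply Finset.prod_le_prod
    · intro i hi
      have : (i : ℝ) < r := by exact_mod_cast Finset.mem_range.1 hi
      push_cast
      apply div_nonneg <;> linarith
    · intro i hi
      have : (i : ℝ) < r := by exact_mod_cast Finset.mem_range.1 hi
      have i0 : (0 : ℝ) ≤ i := by positivity
      push_cast
      rw [div_le_div_iff₀ (by linarith) (by linarith)]
      nlinarith [mul_nonneg hk0 i0]
  have hcinv : 1 ≤ c * Real.exp (m / D) := by
    have h1 := Real.add_one_le_exp ((m : ℝ) / D)
    have p1 : (0 : ℝ) < N - m - r := by linarith
    have h2 : ((m : ℝ) - k) / (N - m - r) ≤ m / D := by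
      apply div_le_div₀ <;> linarith
    have h3 : 1 = c * ((m - k) / (N - m - r) + 1) := by
      rw [hc]
      have p2 : (0 : ℝ) < N - k - r := by linarith
      field_simp
      ring
    calc (1 : ℝ) = c * ((m - k) / (N - m - r) + 1) := h3
      _ ≤ _ := mul_le_mul_of_nonneg_left (by linarith) hc0.le
  have hT2nn : 0 ≤ ∏ j ∈ Finset.range r, ((N : ℝ) - m - ((r + 1 + j : ℕ) : ℝ)) / (N - (k + k : ℕ) - ((r + 1 + j : ℕ) : ℝ)) := by
    apply Finset.prod_nonneg
    intro i hi
    have : (i : ℝ) < r := by exact_mod_cast Finset.mem_range.1 hi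
    push_cast
    apply div_nonneg <;> linarith
  have hT1nn : 0 ≤ ∏ j ∈ Finset.range (r + 1), ((N : ℝ) - m - j) / (N - (k + k : ℕ) - j) := by
    apply Finset.prod_nonneg
    intro i hi
    have : (i : ℝ) < r + 1 := by exact_mod_cast Finset.mem_range.1 hi
    push_cast
    apply div_nonneg <;> linarith
  rw [hq1]
  unfold q
  rw [Finset.prod_range_add _ (r + 1) r]
  calc _ ≤ (a * a) * ((b * c * Real.exp (k * (r + 1) / D)) * b) := by
        apply mul_le_mul hA _ (mul_nonneg hT1nn hT2nn) (mul_nonneg ha0 ha0)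
        exact mul_le_mul hT1 hT2 hT2nn (by positivity)
    _ = (a * a * b * b * c * Real.exp (k * (r + 1) / D)) * 1 := by ring
    _ ≤ (a * a * b * b * c * Real.exp (k * (r + 1) / D)) * (c * Real.exp (m / D)) := by
        apply mul_le_mul_of_nonneg_left hcinv
        positivity
    _ = (a * (b * c)) ^ 2 * (Real.exp (k * (r + 1) / D) * Real.exp (m / D)) := by ring
    _ = _ := by rw [← Real.exp_add, ← add_div]

end qbounds

section asymp

theorem numEdges_cast (n : ℕ) : (numEdges n : ℝ) = (n : ℝ) * (n - 1) / 2 := by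
  unfold numEdges
  rw [← Nat.choose_two_right, Nat.cast_choose_two]

/-- numerical regime -/
structure Reg (n K M m : ℕ) (C l g : ℝ) : Prop where
  hK : 1 ≤ K
  hC : 0 ≤ C
  hg1 : l ≤ g
  hg2 : g ≤ 2 * l
  hm1 : (m : ℝ) ≤ n * g / 2
  hm2 : (n : ℝ) * g / 2 - 1 ≤ m
  hM : (M : ℝ) ≤ C * n
  hn : 100 * (K + 1 + C) ^ 2 * l ^ 2 ≤ n
  hl : 4 * (C + K + 1) ≤ l

theorem Reg.basic {n K M m : ℕ} {C l g : ℝ} (h : Reg n K M m C l g) :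
    8 ≤ l ∧ 100 * (K + 1) ^ 2 * l ^ 2 ≤ n ∧ 400 * l ^ 2 ≤ n ∧ 3200 * l ≤ n ∧ 25600 ≤ (n : ℝ) ∧ (m : ℝ) ≤ n * l ∧
    2 * (n : ℝ) * (C + K + 1) - 1 ≤ m ∧ (K : ℝ) * 100 ≤ n ∧ (m : ℝ) ≤ n * n / 3200 ∧
    (n : ℝ) * n / 4 ≤ numEdges n - m - 4 * n := by
  have hK : (1 : ℝ) ≤ K := by exact_mod_cast h.hK
  have hC := h.hC
  have hl := h.hl
  have hn := h.hn
  have hg1 := h.hg1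
  have hg2 := h.hg2
  have hm1 := h.hm1
  have hm2 := h.hm2
  have n0 : (0 : ℝ) ≤ n := by positivity
  have l8 : 8 ≤ l := by linarith
  have a1 : 100 * ((K : ℝ) + 1) ^ 2 * l ^ 2 ≤ n := by
    refine le_trans ?_ hn
    apply mul_le_mul_of_nonneg_right _ (sq_nonneg l)
    apply mul_le_mul_of_nonneg_left _ (by norm_num)
    exact pow_le_pow_left₀ (by positivity) (by linarith) 2
  have a2 : 400 * l ^ 2 ≤ n := by
    refine le_trans ?_ a1
    have : (4 : ℝ) ≤ ((K : ℝ) + 1) ^ 2 := by nlinarith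
    nlinarith [sq_nonneg l]
  have a3 : 3200 * l ≤ n := by nlinarith
  have a4 : (25600 : ℝ) ≤ n := by nlinarith
  have a5 : (m : ℝ) ≤ n * l := by nlinarith
  have a6 : 2 * (n : ℝ) * (C + K + 1) - 1 ≤ m := by nlinarith
  have a7 : (K : ℝ) * 100 ≤ n := by
    refine le_trans ?_ a1
    have : (1 : ℝ) ≤ l ^ 2 := by nlinarith
    nlinarith [sq_nonneg ((K : ℝ) + 1)]
  have a8 : (m : ℝ) ≤ n * n / 3200 := by nlinarith
  refine ⟨l8, a1, a2, a3, a4, a5, a6, a7, a8, ?_⟩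
  rw [numEdges_cast]
  nlinarith

theorem Reg.exp1 {n K M m : ℕ} {C l g : ℝ} (h : Reg n K M m C l g) (j : ℕ) (hj : j < K) :
    g - 2 * C - 2 ≤ (((m - M : ℕ) : ℝ) - j) * ((n - 1 - j : ℕ) : ℝ) / numEdges n := by
  obtain ⟨l8, a1, a2, a3, a4, a5, a6, a7, a8, a9⟩ := h.basic
  have hK : (1 : ℝ) ≤ K := by exact_mod_cast h.hK
  have hj' : (j : ℝ) ≤ K := by exact_mod_cast hj.le
  have hj0 : (0 : ℝ) ≤ j := by positivity
  have hC := h.hC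
  have hMm : M ≤ m := by
    have : (M : ℝ) ≤ m := by have := h.hM; nlinarith
    exact_mod_cast this
  have hjn : j ≤ n - 1 := by
    have : (K : ℝ) + 1 ≤ n := by linarith
    have : K + 1 ≤ n := by exact_mod_cast this
    omega
  have hn1 : 1 ≤ n := by
    have : (1 : ℝ) ≤ n := by linarith
    exact_mod_cast this
  have hNpos : (0 : ℝ) < numEdges n := by nlinarith
  rw [Nat.cast_sub hMm, Nat.cast_sub hjn, Nat.cast_sub hn1, le_div_iff₀ hNpos, numEdges_cast]
  push_cast
  have hM := h.hM
  have hm2 := h.hm2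
  have M0 : (0 : ℝ) ≤ M := by positivity
  have b1 : (n : ℝ) * (g - 2 * C - 1) / 2 ≤ (m : ℝ) - M - j := by nlinarith
  have b2 : ((m : ℝ) - M - j) * j ≤ n * (n - 1) / 2 := by
    have : ((m : ℝ) - M - j) * j ≤ n * l * K := by
      apply mul_le_mul _ hj' hj0 (by positivity)
      linarith
    refine this.trans ?_
    have : l * K ≤ n / 4 := by nlinarith [sq_nonneg ((K : ℝ) + 1 - l), sq_nonneg l, mul_nonneg (sq_nonneg (K:ℝ)) (by nlinarith : (0:ℝ) ≤ l ^ 2 - l), mul_nonneg (by linarith : (0:ℝ) ≤ K) (by nlinarith : (0:ℝ) ≤ l ^ 2 - l)]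
    nlinarith
  have b3 := mul_le_mul_of_nonneg_right b1 (by linarith : (0 : ℝ) ≤ n - 1)
  nlinarith

theorem Reg.exp2 {n K M m : ℕ} {C l g : ℝ} (h : Reg n K M m C l g) (t : ℕ) (ht : t ≤ n) :
    (t : ℝ) * m / (numEdges n - m - t) ≤ g + 1 := by
  obtain ⟨l8, a1, a2, a3, a4, a5, a6, a7, a8, a9⟩ := h.basic
  have ht' : (t : ℝ) ≤ n := by exact_mod_cast ht
  have hg1 := h.hg1
  have hg2 := h.hg2
  have hm1 := h.hm1
  have m0 : (0 : ℝ) ≤ m := by positivity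
  rw [div_le_iff₀ (by nlinarith)]
  have b1 : (t : ℝ) * m ≤ n * (n * g / 2) := by
    apply mul_le_mul ht' hm1 m0 (by linarith)
  have b2 : (g + 1) * ((n : ℝ) * n / 2 - 2 * n - n * l) ≤ (g + 1) * (numEdges n - m - t) := by
    apply mul_le_mul_of_nonneg_left _ (by linarith)
    rw [numEdges_cast]
    nlinarith
  refine b1.trans (le_trans ?_ b2)
  have b3 : (g + 1) * (2 + l) ≤ n / 2 := by nlinarith
  nlinarith

theorem Reg.exp3 {n K M m : ℕ} {C l g : ℝ} (h : Reg n K M m C l g) (r : ℕ) (hr : r + 1 ≤ n) :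
    ((K : ℝ) * (r + 1) + m) / (numEdges n - m - 2 * K - (r + 1)) ≤ 1 / l := by
  obtain ⟨l8, a1, a2, a3, a4, a5, a6, a7, a8, a9⟩ := h.basic
  have hK : (1 : ℝ) ≤ K := by exact_mod_cast h.hK
  have hr' : (r : ℝ) + 1 ≤ n := by exact_mod_cast hr
  have b0 : (n : ℝ) * n / 4 ≤ numEdges n - m - 2 * K - (r + 1) := by linarith
  rw [div_le_div_iff₀ (by nlinarith) (by linarith), one_mul]
  refine le_trans ?_ b0
  have b1 : (K : ℝ) * (r + 1) + m ≤ n * (K + l) := by nlinarith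
  have b2 : ((K : ℝ) + l) * l ≤ n / 4 := by
    have : (K : ℝ) * l ≤ K ^ 2 * l ^ 2 := by
      have : 1 ≤ (K : ℝ) * l := by nlinarith
      nlinarith
    nlinarith [sq_nonneg l, mul_nonneg (by linarith : (0:ℝ) ≤ K) (sq_nonneg l)]
  nlinarith

set_option maxHeartbeats 2000000 in
theorem Reg.bad1 {n K M m : ℕ} {C l g : ℝ} (h : Reg n K M m C l g)
    (hgl : g = l + (K - 1 / 2) * Real.log l) (hln : l = Real.log n) :
    Pr (fun σ : Ord n => ∀ v, K + 1 ≤ deg (procEdges σ m) v) ≤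
      (3 * K.factorial * 6 ^ K * Real.exp 1) * Real.exp (-(1 / 2 * Real.log l))
        + (Real.exp (1 / l) - 1) := by
  obtain ⟨l8, a1, a2, a3, a4, a5, a6, a7, a8, a9⟩ := h.basic
  have hK : (1 : ℝ) ≤ K := by exact_mod_cast h.hK
  have hC := h.hC
  obtain ⟨r, hr⟩ : ∃ r, n = K + r + 2 := by
    have : (K : ℝ) + 2 ≤ n := by linarith
    have : K + 2 ≤ n := by exact_mod_cast this
    exact ⟨n - (K + 2), by omega⟩
  have hr' : (n : ℝ) = K + r + 2 := by exact_mod_cast hr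
  have n0 : (0 : ℝ) < n := by linarith
  have m0 : (0 : ℝ) ≤ m := by positivity
  have c1 : m + (2 * r + 1) < numEdges n := by
    have : (m : ℝ) + (2 * r + 1) < numEdges n := by nlinarith
    exact_mod_cast this
  have c2 : m + 2 * K + (r + 1) < numEdges n := by
    have : (m : ℝ) + 2 * K + (r + 1) < numEdges n := by nlinarith
    exact_mod_cast this
  have c3 : 2 * K ≤ m := by
    have : 2 * (K : ℝ) ≤ m := by nlinarith
    exact_mod_cast this
  have c4 : K * numEdges n + (r + 1) * K ≤ m * (K + (r + 1)) := by
    have : (K : ℝ) * numEdges n + (r + 1) * K ≤ m * (K + (r + 1)) := by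
      rw [numEdges_cast]
      have e1 : (K : ℝ) + (r + 1) = n - 1 := by linarith
      rw [e1]
      have e2 : (n : ℝ) * K + n ≤ m := by nlinarith
      have e3 := mul_le_mul_of_nonneg_right e2 (by linarith : (0 : ℝ) ≤ n - 1)
      have e4 : ((r : ℝ) + 1) * K ≤ n * (n - 1) / 2 * K := by
        apply mul_le_mul_of_nonneg_right _ (by linarith)
        nlinarith
      nlinarith
    exact_mod_cast this
  have hpair := q_pair (numEdges n) m K r c3 c1 c4 c2
  have e3 := h.exp3 r (by omega)
  have ht1 : n - 1 - K = r + 1 := by omega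
  set q1 := q (numEdges n) m K (r + 1) with hq1
  set q2 := q (numEdges n) m (K + K) (r + 1 + r) with hq2
  have hq2le : q2 ≤ q1 ^ 2 * Real.exp (1 / l) := by
    refine hpair.trans ?_
    exact mul_le_mul_of_nonneg_left (Real.exp_le_exp.2 e3) (sq_nonneg _)
  have hq2nn : 0 ≤ q2 := q_nonneg _ _ _ _ (by omega) (by omega)
  set L : ℝ := ((n / 2 : ℕ) : ℝ) * ((n - n / 2).choose K : ℕ) with hL
  have hb := bound_tau (n := n) (k := K) (m := m) (by omega)
    (by rw [ht1]; exact hq2nn) L hL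
  rw [ht1] at hb
  have hrr : r + 1 + (r + 1) - 1 = r + 1 + r := by omega
  rw [hrr] at hb
  rw [← hq1, ← hq2] at hb
  -- lower bound on L q1
  have hlow := q_lower (numEdges n) m K (r + 1) (by omega) (by omega)
  have e2 := h.exp2 (r + 1) (by omega)
  have d1 : l / (2 * n) ≤ ((m : ℝ) - K) / numEdges n := by
    rw [div_le_div_iff₀ (by positivity) (by nlinarith), numEdges_cast]
    have y1 := h.hm2
    have y2 := mul_le_mul_of_nonneg_left h.hg1 n0.le
    have y3 := mul_le_mul_of_nonneg_left l8 n0.le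
    have y4 : (n : ℝ) * l / 4 ≤ m - K := by linarith
    have y5 := mul_le_mul_of_nonneg_right y4 (by positivity : (0 : ℝ) ≤ 2 * n)
    have y6 : 0 ≤ (n : ℝ) * l := by positivity
    linarith
  have d2 : (n : ℝ) / 3 ≤ ((n / 2 : ℕ) : ℝ) := by
    have : n ≤ 3 * (n / 2) := by
      have : (2 : ℝ) ≤ n := by linarith
      have : 2 ≤ n := by exact_mod_cast this
      omega
    have : (n : ℝ) ≤ 3 * ((n / 2 : ℕ) : ℝ) := by exact_mod_cast this
    linarith
  have d3 : ((n : ℝ) / 3) ^ K / K.factorial ≤ ((n - n / 2).choose K : ℕ) := by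
    have e := Nat.pow_le_choose (α := ℝ) K (n - n / 2)
    refine le_trans ?_ e
    have : (n : ℝ) / 3 ≤ ((n - n / 2 + 1 - K : ℕ) : ℝ) := by
      have : n ≤ 3 * (n - n / 2 + 1 - K) := by
        have : K * 100 ≤ n := by exact_mod_cast a7
        omega
      have : (n : ℝ) ≤ 3 * ((n - n / 2 + 1 - K : ℕ) : ℝ) := by exact_mod_cast this
      linarith
    push_cast
    gcongr
  have hfac : (0 : ℝ) < K.factorial := by exact_mod_cast Nat.factorial_pos K
  have hl0 : 0 < l := by linarith
  have hx : (3 * K.factorial * 6 ^ K * Real.exp 1)⁻¹ * Real.exp (1 / 2 * Real.log l) ≤ L * q1 := by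
    have f1 : ((n : ℝ) / 3) * (((n : ℝ) / 3) ^ K / K.factorial) ≤ L := by
      rw [hL]
      exact mul_le_mul d2 d3 (by positivity) (by positivity)
    have f2 : (l / (2 * n)) ^ K * Real.exp (-(g + 1)) ≤ q1 := by
      refine le_trans ?_ hlow
      push_cast at e2 ⊢
      apply mul_le_mul
      · exact pow_le_pow_left₀ (by positivity) d1 _
      · exact Real.exp_le_exp.2 (by linarith)
      · positivity
      · have : 0 ≤ ((m : ℝ) - K) / numEdges n := le_trans (by positivity) d1
        positivity
    have f3 := mul_le_mul f1 f2 (by positivity) (le_trans (by positivity) f1)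
    refine le_trans (le_of_eq ?_) f3
    have g1 : Real.exp (-(g + 1)) = (n : ℝ)⁻¹ * (l ^ K)⁻¹ * Real.exp (1 / 2 * Real.log l) * (Real.exp 1)⁻¹ := by
      have : -(g + 1) = -Real.log n + -(K * Real.log l) + 1 / 2 * Real.log l + -1 := by
        rw [hgl, ← hln]; ring
      rw [this, Real.exp_add, Real.exp_add, Real.exp_add, Real.exp_neg, Real.exp_log n0,
        Real.exp_neg, Real.exp_nat_mul, Real.exp_log hl0, Real.exp_neg]
    rw [g1, div_pow, div_pow, mul_pow, show (6 : ℝ) = 2 * 3 by norm_num, mul_pow]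
    field_simp
  set x := L * q1 with hxd
  have hxpos : 0 < x := lt_of_lt_of_le (by positivity) hx
  have hL2 : L ^ 2 * q2 ≤ x ^ 2 * Real.exp (1 / l) := by
    have := mul_le_mul_of_nonneg_left hq2le (sq_nonneg L)
    rw [hxd]; linarith
  have hfin : Pr (fun σ : Ord n => ∀ v, K + 1 ≤ deg (procEdges σ m) v)
      ≤ x⁻¹ + (Real.exp (1 / l) - 1) := by
    have hx2 : 0 < x ^ 2 := by positivity
    rw [← mul_le_mul_iff_left₀ hx2]
    have : (x⁻¹ + (Real.exp (1 / l) - 1)) * x ^ 2 = x + x ^ 2 * Real.exp (1 / l) - x ^ 2 := by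
      field_simp
      ring
    rw [this]
    linarith
  refine hfin.trans ?_
  have := inv_anti₀ (by positivity) hx
  rw [mul_inv (3 * (K.factorial : ℝ) * 6 ^ K * Real.exp 1)⁻¹, inv_inv, ← Real.exp_neg] at this
  linarith

theorem Reg.bad2 {n K M m : ℕ} {C l g : ℝ} (h : Reg n K M m C l g)
    (hgl : g = l + (K - 1 / 2) * Real.log l) (hln : l = Real.log n) :
    Pr (fun σ : Ord n => ∃ v : Fin n, ((Finset.univ : Finset (Fin (numEdges n))).filter
            (fun i : Fin (numEdges n) => M ≤ (i : ℕ) ∧ (i : ℕ) < m ∧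
              v ∈ ((σ i : EdgeType n) : Sym2 (Fin n)))).card < K)
      ≤ (K * 4 ^ (K - 1) * Real.exp (2 * C + 2)) * Real.exp (-(1 / 2 * Real.log l)) := by
  obtain ⟨l8, a1, a2, a3, a4, a5, a6, a7, a8, a9⟩ := h.basic
  have hK : (1 : ℝ) ≤ K := by exact_mod_cast h.hK
  have hC := h.hC
  have hM := h.hM
  have n0 : (0 : ℝ) < n := by linarith
  have hl0 : 0 < l := by linarith
  have c1 : m + n < numEdges n := by
    have : (m : ℝ) + n < numEdges n := by nlinarith
    exact_mod_cast this
  have c2 : M + K ≤ m := by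
    have : (M : ℝ) + K ≤ m := by nlinarith
    exact_mod_cast this
  have hNpos : (0 : ℝ) < numEdges n := by nlinarith
  refine (bound_int (n := n) (k := K) (M := M) (m := m) (by omega)).trans ?_
  have hterm : ∀ j ∈ Finset.range K, ((n - 1).choose j : ℝ) * q (numEdges n) (m - M) j (n - 1 - j)
      ≤ (4 * l) ^ (K - 1) * Real.exp (-(g - 2 * C - 2)) := by
    intro j hj
    have hj := Finset.mem_range.1 hj
    have f1 := q_upper (numEdges n) (m - M) j (n - 1 - j) (by omega) (by omega)
    have f2 := h.exp1 j hj
    have f3 : ((n - 1).choose j : ℝ) ≤ (n : ℝ) ^ j := by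
      have : (n - 1).choose j ≤ n ^ j :=
        (Nat.choose_le_pow (n - 1) j).trans (Nat.pow_le_pow_left (Nat.sub_le _ _) _)
      exact_mod_cast this
    have f4 : (n : ℝ) * (((m - M : ℕ) : ℝ) / numEdges n) ≤ 4 * l := by
      have : ((m - M : ℕ) : ℝ) ≤ m := by exact_mod_cast Nat.sub_le _ _
      rw [mul_div_assoc', div_le_iff₀ hNpos, numEdges_cast]
      have : (n : ℝ) * ((m - M : ℕ) : ℝ) ≤ n * (n * l) := by
        apply mul_le_mul_of_nonneg_left _ n0.le
        linarith
      nlinarith [mul_pos n0 hl0]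
    calc _ ≤ (n : ℝ) ^ j * ((((m - M : ℕ) : ℝ) / numEdges n) ^ j *
            Real.exp (-(g - 2 * C - 2))) := by
          apply mul_le_mul f3 _ (q_nonneg _ _ _ _ (by omega) (by omega)) (by positivity)
          refine f1.trans ?_
          apply mul_le_mul_of_nonneg_left _ (by positivity)
          exact Real.exp_le_exp.2 (by linarith)
      _ = ((n : ℝ) * (((m - M : ℕ) : ℝ) / numEdges n)) ^ j * Real.exp (-(g - 2 * C - 2)) := by
          rw [mul_pow]; ring
      _ ≤ (4 * l) ^ j * Real.exp (-(g - 2 * C - 2)) := by gcongr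
      _ ≤ _ := by
          apply mul_le_mul_of_nonneg_right _ (Real.exp_pos _).le
          exact pow_le_pow_right₀ (by linarith) (by omega)
  have hsum := Finset.sum_le_sum hterm
  rw [Finset.sum_const, Finset.card_range, nsmul_eq_mul] at hsum
  refine (mul_le_mul_of_nonneg_left hsum n0.le).trans (le_of_eq ?_)
  obtain ⟨J, rfl⟩ : ∃ J, K = J + 1 := ⟨K - 1, by have := h.hK; omega⟩
  simp only [Nat.add_sub_cancel]
  have g1 : Real.exp (-(g - 2 * C - 2)) = (n : ℝ)⁻¹ * (l ^ J)⁻¹ * Real.exp (-(1 / 2 * Real.log l)) * Real.exp (2 * C + 2) := by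
    have : -(g - 2 * C - 2) = -Real.log n + -(J * Real.log l) + -(1 / 2 * Real.log l) + (2 * C + 2) := by
      rw [hgl, ← hln]; push_cast; ring
    rw [this, Real.exp_add, Real.exp_add, Real.exp_add, Real.exp_neg, Real.exp_log n0,
      Real.exp_neg (J * Real.log l), Real.exp_nat_mul, Real.exp_log hl0]
  rw [g1, mul_pow]
  field_simp

theorem eventually_reg (K : ℕ) (hK : 1 ≤ K) (C : ℝ) (hC : 0 ≤ C) :
    ∀ᶠ n : ℕ in Filter.atTop, Reg n K ⌊C * (n : ℝ)⌋₊
      ⌊(n : ℝ) * (Real.log n + (K - 1 / 2) * Real.log (Real.log n)) / 2⌋₊ C (Real.log n)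
      (Real.log n + (K - 1 / 2) * Real.log (Real.log n)) := by
  have hK' : (1 : ℝ) ≤ K := by exact_mod_cast hK
  have hlog : Filter.Tendsto (fun n : ℕ => Real.log n) Filter.atTop Filter.atTop :=
    Real.tendsto_log_atTop.comp tendsto_natCast_atTop_atTop
  have e1 : ∀ᶠ n : ℕ in Filter.atTop, 4 * (C + K + 1) ≤ Real.log n :=
    hlog.eventually_ge_atTop _
  have e2 : ∀ᶠ n : ℕ in Filter.atTop, 100 * (K + 1 + C) ^ 2 * Real.log n ^ 2 ≤ n := by
    have h0 : (fun x : ℝ => Real.log x ^ 2) =o[Filter.atTop] fun x => x := by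
      exact Real.isLittleO_pow_log_id_atTop (n := 2)
    have hc : (0 : ℝ) < (100 * (K + 1 + C) ^ 2)⁻¹ := by positivity
    have := tendsto_natCast_atTop_atTop (R := ℝ) |>.eventually (h0.bound hc)
    filter_upwards [this] with n hn
    rw [Real.norm_of_nonneg (by positivity), Real.norm_of_nonneg (by positivity)] at hn
    rwa [← div_eq_inv_mul, le_div_iff₀ (by positivity), mul_comm] at hn
  have e3 : ∀ᶠ n : ℕ in Filter.atTop, (K : ℝ) * Real.log (Real.log n) ≤ Real.log n := by
    have hc : (0 : ℝ) < (K : ℝ)⁻¹ := by positivity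
    have := hlog.eventually (Real.isLittleO_log_id_atTop.bound hc)
    filter_upwards [this, e1] with n hn h1
    rw [Real.norm_of_nonneg (Real.log_nonneg (by linarith)), id,
      Real.norm_of_nonneg (by linarith)] at hn
    rwa [← div_eq_inv_mul, le_div_iff₀ (by positivity), mul_comm] at hn
  filter_upwards [e1, e2, e3] with n h1 h2 h3
  have hll : 0 ≤ Real.log (Real.log n) := Real.log_nonneg (by linarith)
  have n0 : (0 : ℝ) ≤ n := by positivity
  have hx : 0 ≤ ((K : ℝ) - 1 / 2) * Real.log (Real.log n) := mul_nonneg (by linarith) hll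
  have hfl : 0 ≤ (n : ℝ) * (Real.log n + (K - 1 / 2) * Real.log (Real.log n)) / 2 := by
    have : 0 ≤ Real.log n + ((K : ℝ) - 1 / 2) * Real.log (Real.log n) := by linarith
    positivity
  refine ⟨hK, hC, by linarith, by linarith, Nat.floor_le hfl, ?_, Nat.floor_le (by positivity),
    h2, h1⟩
  have := Nat.lt_floor_add_one ((n : ℝ) * (Real.log n + (K - 1 / 2) * Real.log (Real.log n)) / 2)
  linarith

end asymp

/-- Fix an integer `k ≥ 2` and constants `δ > 0`, `0 < ε < δ/(2k)`, and
set `C = k·ε⁻²`. With high probability, for every vertex `v` with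
`1 ≤ deg_{B_{⌊Cn⌋}}(v) ≤ k − 1` (Builder's graph from Algorithm 1), at least `k − 1` of
the edges `e_{⌊Cn⌋+1}, …, e_{τ_k}` are incident to `v`. -/
theorem low_degree_vertices_get_edges (k : ℕ) (hk : 2 ≤ k) (δ ε : ℝ) (hδ : 0 < δ)
    (hε : 0 < ε) (hεδ : ε < δ / (2 * k)) :
    Filter.Tendsto
      (fun n : ℕ => Pr (fun σ : Ord n =>
        ∀ v : Fin n,
          1 ≤ deg (algB k σ ⌊(k : ℝ) * ε⁻¹ ^ 2 * (n : ℝ)⌋₊) v →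
          deg (algB k σ ⌊(k : ℝ) * ε⁻¹ ^ 2 * (n : ℝ)⌋₊) v ≤ k - 1 →
          k - 1 ≤ ((Finset.univ : Finset (Fin (numEdges n))).filter
            (fun i : Fin (numEdges n) => ⌊(k : ℝ) * ε⁻¹ ^ 2 * (n : ℝ)⌋₊ ≤ (i : ℕ) ∧ (i : ℕ) < tau k σ ∧
              v ∈ ((σ i : EdgeType n) : Sym2 (Fin n)))).card))
      Filter.atTop (nhds 1) := by
  obtain ⟨K, rfl⟩ : ∃ K, k = K + 1 := ⟨k - 1, by omega⟩
  have hK : 1 ≤ K := by omega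
  have hK' : (1 : ℝ) ≤ K := by exact_mod_cast hK
  set C : ℝ := ((K + 1 : ℕ) : ℝ) * ε⁻¹ ^ 2 with hCdef
  have hC : 0 ≤ C := by positivity
  have hlog : Filter.Tendsto (fun n : ℕ => Real.log n) Filter.atTop Filter.atTop :=
    Real.tendsto_log_atTop.comp tendsto_natCast_atTop_atTop
  have hs : Filter.Tendsto (fun n : ℕ => Real.exp (-(1 / 2 * Real.log (Real.log n))))
      Filter.atTop (nhds 0) := by
    apply Real.tendsto_exp_neg_atTop_nhds_zero.comp
    exact (Real.tendsto_log_atTop.comp hlog).const_mul_atTop (by norm_num)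
  have he : Filter.Tendsto (fun n : ℕ => Real.exp (1 / Real.log n) - 1)
      Filter.atTop (nhds 0) := by
    have h1 : Filter.Tendsto (fun n : ℕ => 1 / Real.log n) Filter.atTop (nhds 0) :=
      hlog.const_div_atTop 1
    have h2 := (Real.continuous_exp.tendsto 0).comp h1
    simpa using h2.sub_const 1
  have hlim : Filter.Tendsto (fun n : ℕ => 1 - ((
      (3 * K.factorial * 6 ^ K * Real.exp 1) * Real.exp (-(1 / 2 * Real.log (Real.log n)))
        + (Real.exp (1 / Real.log n) - 1)) +
      (K * 4 ^ (K - 1) * Real.exp (2 * C + 2)) * Real.exp (-(1 / 2 * Real.log (Real.log n)))))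
      Filter.atTop (nhds 1) := by
    have := (((hs.const_mul (3 * K.factorial * 6 ^ K * Real.exp 1)).add he).add
      (hs.const_mul (K * 4 ^ (K - 1) * Real.exp (2 * C + 2)))).const_sub 1
    simpa using this
  refine tendsto_of_tendsto_of_tendsto_of_le_of_le' hlim tendsto_const_nhds ?_
    (Filter.Eventually.of_forall fun n => Pr_le_one _)
  filter_upwards [eventually_reg K hK C hC] with n hreg
  have b1 := hreg.bad1 rfl rfl
  have b2 := hreg.bad2 rfl rfl
  set m := ⌊(n : ℝ) * (Real.log n + (K - 1 / 2) * Real.log (Real.log n)) / 2⌋₊ with hm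
  set M := ⌊C * (n : ℝ)⌋₊ with hM
  rw [Pr_not]
  have hor := (Pr_or (n := n) _ _).trans (add_le_add b1 b2)
  refine sub_le_sub_left (le_trans (Pr_mono ?_) hor) 1
  intro σ hσ
  by_contra hcon
  rw [not_or] at hcon
  obtain ⟨hc1, hc2⟩ := hcon
  push Not at hc1 hc2
  apply hσ
  intro v _ _
  obtain ⟨w, hw⟩ := hc1
  have hKn : K + 1 ≤ n - 1 := by
    obtain ⟨l8, a1, a2, a3, a4, a5, a6, a7, a8, a9⟩ := hreg.basic
    have : (K : ℝ) + 2 ≤ n := by linarith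
    have : K + 2 ≤ n := by exact_mod_cast this
    omega
  have htau := lt_tau σ (K + 1) m hKn w hw
  have h2 := hc2 v
  rw [Nat.add_sub_cancel]
  refine h2.trans (Finset.card_le_card ?_)
  apply Finset.monotone_filter_right
  rintro i _ ⟨ha, hb, hc⟩
  exact ⟨ha, hb.trans htau, hc⟩

end RGP
end

section
/- Let uv ∈ E(G) and let r, s be integers with 1 ≤ r ≤ d(u) and 1 ≤ s ≤ d(v). The probability that exactly r−1 of the edges of G incident to u and exactly s−1 of the edges of G incident to v precede uv in the random ordering equals (1/(d(u)+d(v)−1)) · binom(d(u)−1, r−1)·binom(d(v)−1, s−1) / binom(d(u)+d(v)−2, r+s−2). -/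
open Finset

namespace RGP14

section Helpers

open scoped Classical

variable {α : Type*} [Fintype α] {n : ℕ}

/-- Each element of `S` is first among `S` in the same number of orderings. -/
lemma card_first (S : Finset α) (e : α) (he : e ∈ S) :
    #S * #{f : Fin n ≃ α | ∀ x ∈ S, f.symm e ≤ f.symm x} = Fintype.card (Fin n ≃ α) := by
  have h1 : ∀ y ∈ S, #{f : Fin n ≃ α | ∀ x ∈ S, f.symm y ≤ f.symm x}
      = #{f : Fin n ≃ α | ∀ x ∈ S, f.symm e ≤ f.symm x} := by
    intro y hy
    have hsw : ∀ x ∈ S, Equiv.swap e y x ∈ S := by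
      intro x hx
      rw [Equiv.swap_apply_def]
      split_ifs <;> assumption
    refine Finset.card_bij' (fun f _ => f.trans (Equiv.swap e y))
      (fun f _ => f.trans (Equiv.swap e y)) ?_ ?_ ?_ ?_
    · intro f hf
      simp only [mem_filter, mem_univ, true_and, Equiv.symm_trans_apply, Equiv.symm_swap,
        Equiv.swap_apply_left] at hf ⊢
      exact fun x hx => hf _ (hsw x hx)
    · intro f hf
      simp only [mem_filter, mem_univ, true_and, Equiv.symm_trans_apply, Equiv.symm_swap,
        Equiv.swap_apply_right] at hf ⊢
      exact fun x hx => hf _ (hsw x hx)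
    · intro f _
      ext x
      simp
    · intro f _
      ext x
      simp
  rw [← smul_eq_mul, ← Finset.sum_const, ← Finset.sum_congr rfl h1, ← Finset.card_biUnion]
  · rw [← Finset.card_univ]
    congr 1
    ext f
    simp only [mem_biUnion, mem_filter, mem_univ, true_and, iff_true]
    exact Finset.exists_min_image S f.symm ⟨e, he⟩
  · intro y hy z hz hyz
    rw [Function.onFun, Finset.disjoint_left]
    intro f hf hf'
    simp only [mem_filter, mem_univ, true_and] at hf hf'
    exact hyz (f.symm.injective (le_antisymm (hf z hz) (hf' y hy)))

/-- The number of orderings with `P` before `e` and `Q` after `e`. -/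
lemma card_before_after (e : α) (P : Finset α) : ∀ (Q : Finset α), e ∉ P → e ∉ Q → Disjoint P Q →
    (#{f : Fin n ≃ α | (∀ x ∈ P, f.symm x < f.symm e) ∧ ∀ x ∈ Q, f.symm e < f.symm x} : ℝ)
      = Fintype.card (Fin n ≃ α) * ((#P).factorial * (#Q).factorial / (#P + #Q + 1).factorial) := by
  induction P using Finset.induction_on with
  | empty =>
    intro Q _ hQ _
    have h := card_first (n := n) (insert e Q) e (by simp)
    rw [Finset.card_insert_of_notMem hQ] at h
    have h2 : ({f : Fin n ≃ α | ∀ x ∈ insert e Q, f.symm e ≤ f.symm x} : Finset _) =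
        ({f : Fin n ≃ α | (∀ x ∈ (∅ : Finset α), f.symm x < f.symm e) ∧
          ∀ x ∈ Q, f.symm e < f.symm x} : Finset _) := by
      ext f
      simp only [mem_filter, mem_univ, true_and, mem_insert, forall_eq_or_imp, le_refl,
        notMem_empty, false_imp_iff, implies_true]
      refine forall₂_congr fun x hx => ⟨fun h => lt_of_le_of_ne h ?_, le_of_lt⟩
      intro h'
      exact hQ (f.symm.injective h' ▸ hx)
    rw [h2] at h
    rw [← h]
    simp only [card_empty, zero_add, Nat.factorial_zero, Nat.factorial_succ]
    push_cast
    have := Nat.factorial_ne_zero (#Q)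
    field_simp
  | insert x P hx ih =>
    intro Q heP heQ hd
    rw [mem_insert, not_or] at heP
    rw [Finset.disjoint_insert_left] at hd
    have a1 := ih Q heP.2 heQ hd.2
    have a2 := ih (insert x Q) heP.2 (by simp [heQ, heP.1])
      (by rw [Finset.disjoint_insert_right]; exact ⟨hx, hd.2⟩)
    have key : #{f : Fin n ≃ α | (∀ x ∈ P, f.symm x < f.symm e) ∧ ∀ x ∈ Q, f.symm e < f.symm x}
        = #{f : Fin n ≃ α | (∀ y ∈ insert x P, f.symm y < f.symm e) ∧
            ∀ x ∈ Q, f.symm e < f.symm x}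
          + #{f : Fin n ≃ α | (∀ y ∈ P, f.symm y < f.symm e) ∧
            ∀ y ∈ insert x Q, f.symm e < f.symm y} := by
      rw [← Finset.card_filter_add_card_filter_not (fun f : Fin n ≃ α => f.symm x < f.symm e),
        Finset.filter_filter, Finset.filter_filter]
      congr 2
      · ext f
        simp only [mem_filter, mem_univ, true_and, mem_insert, forall_eq_or_imp]
        tauto
      · ext f
        have : ¬ (f.symm x < f.symm e) ↔ f.symm e < f.symm x := by
          rw [not_lt]
          refine ⟨fun h => lt_of_le_of_ne h fun h' => heP.1 (f.symm.injective h'), le_of_lt⟩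
        simp only [mem_filter, mem_univ, true_and, mem_insert, forall_eq_or_imp, this]
        tauto
    have key' := congrArg (Nat.cast : ℕ → ℝ) key
    rw [Nat.cast_add, a1, a2] at key'
    rw [← sub_eq_iff_eq_add] at key'
    rw [← key', Finset.card_insert_of_notMem hd.1, Finset.card_insert_of_notMem hx]
    have e1 : #P + (#Q + 1) + 1 = (#P + #Q + 1) + 1 := by ring
    have e2 : #P + 1 + #Q + 1 = (#P + #Q + 1) + 1 := by ring
    rw [e1, e2, Nat.factorial_succ (#P + #Q + 1), Nat.factorial_succ (#Q),
      Nat.factorial_succ (#P)]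
    have := Nat.factorial_ne_zero (#P + #Q + 1)
    push_cast
    field_simp
    ring

lemma filter_eq_iff' (A S : Finset α) (hS : S ⊆ A) (p : α → Prop) [DecidablePred p] :
    A.filter p = S ↔ (∀ x ∈ S, p x) ∧ ∀ x ∈ A \ S, ¬ p x := by
  constructor
  · rintro rfl
    refine ⟨fun x hx => (mem_filter.1 hx).2, fun x hx hp => ?_⟩
    simp only [mem_sdiff, mem_filter] at hx
    tauto
  · rintro ⟨h1, h2⟩
    ext x
    simp only [mem_filter, mem_sdiff] at *
    refine ⟨fun h => by_contra fun h' => h2 x ⟨h.1, h'⟩ h.2, fun h => ⟨hS h, h1 x h⟩⟩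

lemma card_event (e : α) (A B : Finset α) (hA : e ∉ A) (hB : e ∉ B) (hd : Disjoint A B)
    (i j : ℕ) :
    (#{f : Fin n ≃ α | #{x ∈ A | f.symm x < f.symm e} = i ∧
        #{x ∈ B | f.symm x < f.symm e} = j} : ℝ)
      = Fintype.card (Fin n ≃ α) * ((#A).choose i * (#B).choose j *
        ((i + j).factorial * (#A - i + (#B - j)).factorial /
          (i + j + (#A - i + (#B - j)) + 1).factorial)) := by
  rw [Finset.card_eq_sum_card_fiberwise (t := powersetCard i A ×ˢ powersetCard j B)
    (f := fun f : Fin n ≃ α => ({x ∈ A | f.symm x < f.symm e}, {x ∈ B | f.symm x < f.symm e}))]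
  · rw [Nat.cast_sum, Finset.sum_congr rfl (g := fun _ => (Fintype.card (Fin n ≃ α) : ℝ) *
        ((i + j).factorial * (#A - i + (#B - j)).factorial /
          (i + j + (#A - i + (#B - j)) + 1).factorial))]
    · rw [Finset.sum_const, card_product, card_powersetCard, card_powersetCard, nsmul_eq_mul]
      push_cast
      ring
    · rintro ⟨S, T⟩ h
      simp only [mem_product, mem_powersetCard] at h
      obtain ⟨⟨hSA, rfl⟩, hTB, rfl⟩ := h
      have hST : Disjoint S T := hd.mono hSA hTB
      have h := card_before_after (n := n) e (S ∪ T) ((A \ S) ∪ (B \ T))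
        (by simp only [mem_union]; rintro (h | h); exacts [hA (hSA h), hB (hTB h)])
        (by simp [hA, hB])
        (by
          rw [Finset.disjoint_left] at *
          intro x hx
          simp only [mem_union, mem_sdiff] at *
          have := @hd x
          have := @hSA x
          have := @hTB x
          tauto)
      rw [card_union_of_disjoint hST, card_union_of_disjoint
        (hd.mono sdiff_subset sdiff_subset), card_sdiff_of_subset hSA,
        card_sdiff_of_subset hTB] at h
      rw [← h, Finset.filter_filter]
      congr 2
      ext f
      have hlt : ∀ x, x ≠ e → (¬ (f.symm x < f.symm e) ↔ f.symm e < f.symm x) := by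
        intro x hx
        rw [not_lt]
        refine ⟨fun h => lt_of_le_of_ne h fun h' => hx (f.symm.injective h').symm, le_of_lt⟩
      have h1 : (∀ x ∈ A \ S, ¬ (f.symm x < f.symm e)) ↔ ∀ x ∈ A \ S, f.symm e < f.symm x :=
        forall₂_congr fun x hx => hlt x fun h => hA (h ▸ (mem_sdiff.1 hx).1)
      have h2 : (∀ x ∈ B \ T, ¬ (f.symm x < f.symm e)) ↔ ∀ x ∈ B \ T, f.symm e < f.symm x :=
        forall₂_congr fun x hx => hlt x fun h => hB (h ▸ (mem_sdiff.1 hx).1)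
      have g1 := filter_eq_iff' A S hSA (fun x => f.symm x < f.symm e)
      have g2 := filter_eq_iff' B T hTB (fun x => f.symm x < f.symm e)
      rw [h1] at g1
      rw [h2] at g2
      simp only [mem_filter, mem_univ, true_and, Prod.mk.injEq, forall_mem_union]
      constructor
      · rintro ⟨-, q1, q2⟩
        have q1' := g1.1 q1
        have q2' := g2.1 q2
        tauto
      · rintro ⟨⟨p1, p2⟩, p3, p4⟩
        have q1 := g1.2 ⟨p1, p3⟩
        have q2 := g2.2 ⟨p2, p4⟩
        exact ⟨⟨congrArg card q1, congrArg card q2⟩, q1, q2⟩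
  · intro f hf
    simp only [coe_filter, mem_univ, true_and, Set.mem_ofPred_eq] at hf
    simp only [coe_product, Set.mem_prod, mem_coe, mem_powersetCard]
    exact ⟨⟨filter_subset _ _, hf.1⟩, filter_subset _ _, hf.2⟩

end Helpers

open scoped Classical in
lemma card_transfer {V : Type*} [Fintype V] [DecidableEq V] (G : SimpleGraph V) [DecidableRel G.Adj]
    (w : V) (e : Sym2 V) (he : e ∈ G.edgeFinset)
    (p : Sym2 V → Prop) [DecidablePred p]
    (q : {e : Sym2 V // e ∈ G.edgeFinset} → Prop) [DecidablePred q]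
    (hpq : ∀ x, p x.1 ↔ q x) (hp : ¬ p e) :
    #((G.incidenceFinset w).filter p) =
      #(({x : {e : Sym2 V // e ∈ G.edgeFinset} | w ∈ x.1 ∧ x ≠ ⟨e, he⟩} : Finset _).filter q) := by
  symm
  refine Finset.card_bij (fun x _ => x.1) ?_ ?_ ?_
  · intro x hx
    have := SimpleGraph.mem_edgeFinset.1 x.2
    simp only [mem_filter, mem_univ, true_and, ← hpq] at hx
    simp [SimpleGraph.mem_incidenceFinset, SimpleGraph.incidenceSet, hx, this]
  · intro x _ y _ h
    exact Subtype.ext h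
  · intro x hx
    simp only [mem_filter, SimpleGraph.mem_incidenceFinset, SimpleGraph.incidenceSet,
      Set.mem_ofPred_eq] at hx
    refine ⟨⟨x, SimpleGraph.mem_edgeFinset.2 hx.1.1⟩, ?_, rfl⟩
    simp only [mem_filter, mem_univ, true_and, ← hpq]
    refine ⟨⟨hx.1.2, ?_⟩, hx.2⟩
    intro h
    apply hp
    have h' : x = e := congrArg Subtype.val h
    exact h' ▸ hx.2

open scoped Classical in
lemma card_others {V : Type*} [Fintype V] [DecidableEq V] (G : SimpleGraph V) [DecidableRel G.Adj]
    (w : V) (e : Sym2 V) (he : e ∈ G.edgeFinset) (hw : w ∈ e) :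
    #({x : {e : Sym2 V // e ∈ G.edgeFinset} | w ∈ x.1 ∧ x ≠ ⟨e, he⟩} : Finset _)
      = G.degree w - 1 := by
  have h := card_transfer G w e he (fun x => x ≠ e) (fun x => x ≠ ⟨e, he⟩)
    (fun x => by simp [Subtype.ext_iff]) (by simp)
  rw [Finset.filter_filter] at h
  simp only [and_assoc, and_self] at h
  rw [← h, Finset.filter_ne', Finset.card_erase_of_mem, SimpleGraph.card_incidenceFinset_eq_degree]
  rw [SimpleGraph.mem_incidenceFinset]
  exact ⟨SimpleGraph.mem_edgeFinset.1 he, hw⟩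

open scoped Classical in
/-- Let `G` be a finite simple graph, order its edges uniformly at
random, and let `uv ∈ E(G)` and `1 ≤ r ≤ d(u)`, `1 ≤ s ≤ d(v)`. The probability that
exactly `r−1` of the edges incident to `u` and exactly `s−1` of the edges incident to
`v` precede `uv` in the ordering is
`(1/(d(u)+d(v)−1)) · binom(d(u)−1, r−1)·binom(d(v)−1, s−1) / binom(d(u)+d(v)−2, r+s−2)`. -/
theorem edge_order_probability {V : Type*} [Fintype V] [DecidableEq V]
    (G : SimpleGraph V) [DecidableRel G.Adj] (u v : V) (huv : G.Adj u v)
    (r s : ℕ) (hr : 1 ≤ r) (hru : r ≤ G.degree u) (hs : 1 ≤ s) (hsv : s ≤ G.degree v) :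
    (((Finset.univ :
        Finset (Fin G.edgeFinset.card ≃ {e : Sym2 V // e ∈ G.edgeFinset})).filter
      (fun f =>
        letI pos : Sym2 V → ℕ := fun e =>
          if he : e ∈ G.edgeFinset then (f.symm ⟨e, he⟩ : ℕ) else G.edgeFinset.card
        ((G.incidenceFinset u).filter (fun e => pos e < pos s(u, v))).card = r - 1 ∧
        ((G.incidenceFinset v).filter (fun e => pos e < pos s(u, v))).card = s - 1)).card : ℝ) /
      (Fintype.card (Fin G.edgeFinset.card ≃ {e : Sym2 V // e ∈ G.edgeFinset}) : ℝ) =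
    (1 / ((G.degree u + G.degree v - 1 : ℕ) : ℝ)) *
      (((G.degree u - 1).choose (r - 1) : ℝ) * ((G.degree v - 1).choose (s - 1) : ℝ)) /
      (((G.degree u + G.degree v - 2).choose (r + s - 2) : ℝ)) := by
  have he : s(u, v) ∈ G.edgeFinset := SimpleGraph.mem_edgeFinset.2 huv
  set e : {e : Sym2 V // e ∈ G.edgeFinset} := ⟨s(u, v), he⟩ with hedef
  have cu := card_others G u s(u, v) he (by simp)
  have cv := card_others G v s(u, v) he (by simp)
  set A : Finset {e : Sym2 V // e ∈ G.edgeFinset} := {x | u ∈ x.1 ∧ x ≠ ⟨s(u, v), he⟩} with hA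
  set B : Finset {e : Sym2 V // e ∈ G.edgeFinset} := {x | v ∈ x.1 ∧ x ≠ ⟨s(u, v), he⟩} with hB
  have hd : Disjoint A B := by
    rw [Finset.disjoint_left]
    intro x hx hx'
    simp only [hA, hB, mem_filter, mem_univ, true_and] at hx hx'
    exact hx.2 (Subtype.ext ((Sym2.mem_and_mem_iff huv.ne).1 ⟨hx.1, hx'.1⟩))
  have main := card_event (n := G.edgeFinset.card) e A B (by simp [hA, hedef])
    (by simp [hB, hedef]) hd (r - 1) (s - 1)
  have hcard : (Fintype.card (Fin G.edgeFinset.card ≃ {e : Sym2 V // e ∈ G.edgeFinset}) : ℝ) ≠ 0 := by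
    have : Nonempty (Fin G.edgeFinset.card ≃ {e : Sym2 V // e ∈ G.edgeFinset}) :=
      ⟨G.edgeFinset.equivFin.symm⟩
    exact_mod_cast Fintype.card_ne_zero
  rw [div_eq_iff hcard]
  trans (#{f : Fin G.edgeFinset.card ≃ {e : Sym2 V // e ∈ G.edgeFinset} |
      #{x ∈ A | f.symm x < f.symm e} = r - 1 ∧ #{x ∈ B | f.symm x < f.symm e} = s - 1} : ℝ)
  · congr 1
    refine congrArg Finset.card ?_
    ext f
    simp only [mem_filter, mem_univ, true_and]
    have t := fun w => card_transfer G w s(u, v) he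
      (fun x => (if he : x ∈ G.edgeFinset then (f.symm ⟨x, he⟩ : ℕ) else G.edgeFinset.card) <
        (if he : s(u, v) ∈ G.edgeFinset then (f.symm ⟨s(u, v), he⟩ : ℕ) else G.edgeFinset.card))
      (fun x => f.symm x < f.symm e)
      (fun x => by rw [dif_pos x.2, dif_pos he, Fin.lt_def]) (lt_irrefl _)
    have tu := t u
    have tv := t v
    rw [← hA] at tu
    rw [← hB] at tv
    rw [← tu, ← tv]
  · have main' := main
    rw [cu, cv] at main'
    refine Eq.trans ?_ (main'.trans ?_)
    · congr!
    obtain ⟨a, ha⟩ : ∃ a, G.degree u = r + a := ⟨_, (Nat.add_sub_cancel' hru).symm⟩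
    obtain ⟨b, hb⟩ : ∃ b, G.degree v = s + b := ⟨_, (Nat.add_sub_cancel' hsv).symm⟩
    obtain ⟨i, rfl⟩ : ∃ i, r = i + 1 := ⟨r - 1, by omega⟩
    obtain ⟨j, rfl⟩ : ∃ j, s = j + 1 := ⟨s - 1, by omega⟩
    rw [ha, hb]
    have e1 : i + 1 + a - 1 - (i + 1 - 1) + (j + 1 + b - 1 - (j + 1 - 1)) = a + b := by omega
    have e2 : i + 1 + a + (j + 1 + b) - 1 = i + j + (a + b) + 1 := by omega
    have e3 : i + 1 + a + (j + 1 + b) - 2 = i + j + (a + b) := by omega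
    have e4 : i + 1 + (j + 1) - 2 = i + j := by omega
    rw [e1, e2, e3, e4, Nat.add_sub_cancel, Nat.add_sub_cancel, Nat.factorial_succ,
      Nat.cast_add_choose ℝ (a := i + j) (b := a + b)]
    have f1 := Nat.factorial_ne_zero (i + j)
    have f2 := Nat.factorial_ne_zero (a + b)
    have f3 := Nat.factorial_ne_zero (i + j + (a + b))
    push_cast
    field_simp
    rw [mul_assoc, mul_comm]
    congr!

end RGP14
end
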